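/- For all μ, ν ∈ 𝒫_p(𝒳_1 × 𝒳_2), the two-timepoint causal Wasserstein distance CW_p(μ,ν) := inf{(E_π[ρ(X_1,Y_1)^p + ρ(X_2,Y_2)^p])^{1/p} : π a coupling of μ and ν such that π(Y_1 ∈ A | X_1, X_2) = π(Y_1 ∈ A | X_1) π-a.s. for all Borel A ⊆ 𝒳_1} satisfies CW_p(μ,ν) = CW̄_p(disint_{𝒳_1}(μ), disint_{𝒳_1}(ν)); that is, CW̄_p is an extension of CW_p under the embedding of 𝒫_p(𝒳_1 × 𝒳_2) into 𝒫_p(𝒳_1 × 𝒫_p(𝒳_2)) by disintegration. -/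

import Mathlib

open MeasureTheory ProbabilityTheory ENNReal Filter Topology

noncomputable section

namespace AWPaper

/-! ### Generic constructions -/

variable {α β : Type*}

/-- The set of couplings of two measures. -/
def Cpl [MeasurableSpace α] [MeasurableSpace β] (μ : Measure α) (ν : Measure β) :
    Set (Measure (α × β)) :=
  {π | π.map Prod.fst = μ ∧ π.map Prod.snd = ν}

/-- The `p`-Wasserstein distance (with values in `ℝ≥0∞`) associated to an
`ℝ≥0∞`-valued distance function `d`. -/
def Wp [MeasurableSpace α] (p : ℝ) (d : α → α → ℝ≥0∞) (μ ν : Measure α) : ℝ≥0∞ :=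
  ⨅ π ∈ Cpl μ ν, (∫⁻ z, d z.1 z.2 ^ p ∂π) ^ (1 / p)

/-- The topology generated by the open balls of an `ℝ≥0∞`-valued distance
function.  For a genuine metric this is the metric topology. -/
def ballTop (d : α → α → ℝ≥0∞) : TopologicalSpace α :=
  TopologicalSpace.generateFrom {s | ∃ x ε, 0 < ε ∧ s = {y | d x y < ε}}

/-- The product distance of two `ℝ≥0∞`-valued distances, `ℓ^p`-style. -/
def prodDist (p : ℝ) (d₁ : α → α → ℝ≥0∞) (d₂ : β → β → ℝ≥0∞) :
    α × β → α × β → ℝ≥0∞ :=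
  fun u v => (d₁ u.1 v.1 ^ p + d₂ u.2 v.2 ^ p) ^ (1 / p)

/-- Membership in the `p`-Wasserstein space: a probability measure with finite
`p`-th moment (w.r.t. the distance function `d`). -/
def MemPp [MeasurableSpace α] (p : ℝ) (d : α → α → ℝ≥0∞) (μ : Measure α) : Prop :=
  IsProbabilityMeasure μ ∧ ∃ x₀, ∫⁻ x, d x₀ x ^ p ∂μ ≠ ∞

/-- The weak topology on measures induced by integration of bounded continuous
functions, for a given topology `τ` on the base space. -/
def weakTop [MeasurableSpace α] (τ : TopologicalSpace α) : TopologicalSpace (Measure α) :=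
  TopologicalSpace.induced
    (fun μ => fun f : @BoundedContinuousFunction α ℝ τ _ => ∫ x, f x ∂μ)
    Pi.topologicalSpace

/-- The product topology built from two explicitly given topologies. -/
def prodTop (τ₁ : TopologicalSpace α) (τ₂ : TopologicalSpace β) : TopologicalSpace (α × β) :=
  TopologicalSpace.induced Prod.fst τ₁ ⊓ TopologicalSpace.induced Prod.snd τ₂

/-- An everywhere-defined version of the disintegration kernel: it agrees with
`Measure.condKernel` on finite measures. -/
def condK [MeasurableSpace α] [MeasurableSpace β] [StandardBorelSpace β] [Nonempty β]
    (ρ : Measure (α × β)) : Kernel α β :=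
  letI := Classical.dec (IsFiniteMeasure ρ)
  if h : IsFiniteMeasure ρ then @Measure.condKernel α β _ _ _ _ ρ h else 0

/-- The disintegration map `𝒫(A × B) → 𝒫(A × 𝒫(B))`. -/
def disint [MeasurableSpace α] [MeasurableSpace β] [StandardBorelSpace β] [Nonempty β]
    (μ : Measure (α × β)) : Measure (α × Measure β) :=
  μ.map (fun z => (z.1, condK μ z.1))

/-- The intensity ("und") map `𝒫(A × 𝒫(B)) → 𝒫(A × B)`. -/
def und [MeasurableSpace α] [MeasurableSpace β] (μ : Measure (α × Measure β)) :
    Measure (α × β) :=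
  μ.bind (fun z => (Measure.dirac z.1).prod z.2)

/-! ### Path spaces -/

variable {X : Type*} [MeasurableSpace X]

/-- The path-space distance `ρ̄((x_t),(y_t)) = (∑ ρ(x_t,y_t)^p)^{1/p}`. -/
def pathDist (p : ℝ) (d : X → X → ℝ≥0∞) {N : ℕ} :
    (Fin N → X) → (Fin N → X) → ℝ≥0∞ :=
  fun x y => (∑ t, d (x t) (y t) ^ p) ^ (1 / p)

/-- The first `t` coordinates of a path. -/
def restr {N : ℕ} (t : ℕ) (h : t ≤ N) (x : Fin N → X) : Fin t → X :=
  fun s => x (Fin.castLE h s)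

/-- The last `N - t` coordinates of a path. -/
def tailr {N : ℕ} (t : ℕ) (h : t ≤ N) (x : Fin N → X) : Fin (N - t) → X :=
  fun s => x ⟨t + s.1, by have := s.2; omega⟩

/-- A coupling `π` of two path measures is causal: for every `t` and Borel
`A ⊆ 𝒳^t`, `π((Y_1,…,Y_t) ∈ A | X) = π((Y_1,…,Y_t) ∈ A | X_1,…,X_t)` a.s. -/
def Causal {N : ℕ} (π : Measure ((Fin N → X) × (Fin N → X))) : Prop :=
  ∀ (t : ℕ) (h : t ≤ N) (A : Set (Fin t → X)), MeasurableSet A →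
    (π[fun z => A.indicator (fun _ => (1 : ℝ)) (restr t h z.2) |
        MeasurableSpace.comap Prod.fst inferInstance])
      =ᵐ[π]
    (π[fun z => A.indicator (fun _ => (1 : ℝ)) (restr t h z.2) |
        MeasurableSpace.comap (fun z => restr t h z.1) inferInstance])

/-- Bicausal couplings. -/
def Bicausal {N : ℕ} (π : Measure ((Fin N → X) × (Fin N → X))) : Prop :=
  Causal π ∧ Causal (π.map Prod.swap)

/-- The causal Wasserstein "distance" `CW_p`. -/
def CW (p : ℝ) (d : X → X → ℝ≥0∞) {N : ℕ} (μ ν : Measure (Fin N → X)) : ℝ≥0∞ :=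
  ⨅ π ∈ {π ∈ Cpl μ ν | Causal π}, (∫⁻ z, pathDist p d z.1 z.2 ^ p ∂π) ^ (1 / p)

/-- The symmetrized causal Wasserstein distance `SCW_p`. -/
def SCW (p : ℝ) (d : X → X → ℝ≥0∞) {N : ℕ} (μ ν : Measure (Fin N → X)) : ℝ≥0∞ :=
  max (CW p d μ ν) (CW p d ν μ)

/-- The adapted (nested, bicausal) Wasserstein distance `AW_p`. -/
def AW (p : ℝ) (d : X → X → ℝ≥0∞) {N : ℕ} (μ ν : Measure (Fin N → X)) : ℝ≥0∞ :=
  ⨅ π ∈ {π ∈ Cpl μ ν | Bicausal π}, (∫⁻ z, pathDist p d z.1 z.2 ^ p ∂π) ^ (1 / p)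

/-! ### Nested spaces (Pflug's nested distributions / Vershik's iterated spaces) -/

/-- A measurable space together with an `ℝ≥0∞`-valued distance. -/
structure QMS : Type 1 where
  carrier : Type
  inst : MeasurableSpace carrier
  dist : carrier → carrier → ℝ≥0∞

/-- The nested sequence of spaces: `nest X _ d p 0 = 𝒳` (this is `𝒳_N`), and
`nest X _ d p (k+1) = 𝒳 × 𝒫(nest X _ d p k)` with the nested distance
`D = (ρ^p + 𝒲_p^p)^{1/p}`.  Thus `𝒳_1` (for `N = k+1` time points) is
`nest X _ d p k`. -/
def nest (X : Type) (mX : MeasurableSpace X) (d : X → X → ℝ≥0∞) (p : ℝ) : ℕ → QMS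
  | 0 => ⟨X, mX, d⟩
  | (k + 1) =>
    let Q := nest X mX d p k
    ⟨X × @Measure Q.carrier Q.inst,
      @Prod.instMeasurableSpace _ _ mX (@Measure.instMeasurableSpace _ Q.inst),
      fun a b => (d a.1 b.1 ^ p + (@Wp _ Q.inst p Q.dist a.2 b.2) ^ p) ^ (1 / p)⟩

section NMapSec

variable (Y : Type) [mY : MeasurableSpace Y] [TopologicalSpace Y] [PolishSpace Y]
  [BorelSpace Y] [Nonempty Y]

/-- The map `𝒩` sending the law of a process with `k+1` time steps to the
corresponding nested distribution, via iterated regular conditional laws. -/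
def NMap (d : Y → Y → ℝ≥0∞) (p : ℝ) :
    ∀ k : ℕ, Measure (Fin (k + 1) → Y) →
      @Measure (nest Y mY d p k).carrier (nest Y mY d p k).inst
  | 0, μ =>
    letI : MeasurableSpace (nest Y mY d p 0).carrier := (nest Y mY d p 0).inst
    μ.map (fun x => x 0)
  | (k + 1), μ =>
    letI : MeasurableSpace (nest Y mY d p k).carrier := (nest Y mY d p k).inst
    letI : MeasurableSpace (nest Y mY d p (k + 1)).carrier := (nest Y mY d p (k + 1)).inst
    (μ.map (fun x => x 0)).map
      (fun x₀ => (x₀, NMap d p k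
        ((condK (μ.map (fun x => (x 0, fun s : Fin (k + 1) => x s.succ)))) x₀)))

end NMapSec

section PathStructures

variable {Y : Type*} [mY : MeasurableSpace Y]

/-- A process `L` is adapted: `L t` depends only on the first `t+1` coordinates. -/
def AdaptedProc {N : ℕ} (L : Fin N → (Fin N → Y) → ℝ) : Prop :=
  ∀ (t : Fin N) (x y : Fin N → Y), (∀ s : Fin N, s ≤ t → x s = y s) → L t x = L t y

/-- `τ` is a stopping time of the canonical filtration on the path space. -/
def IsStopTime {N : ℕ} (τ : (Fin N → Y) → Fin N) : Prop :=
  ∀ t : Fin N,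
    MeasurableSet[MeasurableSpace.comap (restr (X := Y) (t.1 + 1) t.2) inferInstance]
      {x | τ x = t}

/-- The optimal stopping value `v^L(μ)`. -/
def stopVal {N : ℕ} (L : Fin N → (Fin N → Y) → ℝ) (μ : Measure (Fin N → Y)) : ℝ :=
  ⨅ τ : {τ : (Fin N → Y) → Fin N // IsStopTime τ}, ∫ x, L (τ.1 x) x ∂μ

variable [TopologicalSpace Y]

/-- `AC(X̄)`: adapted processes which are continuous and bounded. -/
def ACbdd {N : ℕ} (L : Fin N → (Fin N → Y) → ℝ) : Prop :=
  (∀ t, Continuous (L t)) ∧ AdaptedProc L ∧ ∃ C : ℝ, ∀ t x, |L t x| ≤ C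

/-- `AC_p(X̄)`: adapted continuous processes of growth of order `p`. -/
def ACp (p : ℝ) (d : Y → Y → ℝ≥0∞) {N : ℕ} (L : Fin N → (Fin N → Y) → ℝ) : Prop :=
  (∀ t, Continuous (L t)) ∧ AdaptedProc L ∧
    ∃ (C : ℝ) (x₀ : Fin N → Y), ∀ t x, |L t x| ≤ C * (1 + ((pathDist p d x₀ x) ^ p).toReal)

/-- The optimal stopping topology (weak version, bounded continuous rewards). -/
def stopTopW (N : ℕ) : TopologicalSpace (Measure (Fin N → Y)) :=
  ⨅ L : {L : Fin N → (Fin N → Y) → ℝ // ACbdd L},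
    TopologicalSpace.induced (stopVal L.1) inferInstance

/-- The `𝒲_p`-optimal stopping topology. -/
def stopTopWp (p : ℝ) (d : Y → Y → ℝ≥0∞) (N : ℕ) :
    TopologicalSpace (Measure (Fin N → Y)) :=
  ⨅ L : {L : Fin N → (Fin N → Y) → ℝ // ACp p d L},
    TopologicalSpace.induced (stopVal L.1) inferInstance

variable [PolishSpace Y] [BorelSpace Y] [Nonempty Y]

/-- Hellwig's map `I_t`, sending `μ` to the joint law of the first `t`
coordinates together with the conditional law of the remaining coordinates. -/
def infoMap (N t : ℕ) (h : t ≤ N) (μ : Measure (Fin N → Y)) :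
    Measure ((Fin t → Y) × Measure (Fin (N - t) → Y)) :=
  μ.map (fun x => (restr t h x,
    condK (μ.map (fun y => (restr t h y, tailr t h y))) (restr t h x)))

/-- Hellwig's information topology (weak version). -/
def infoTopW (N : ℕ) : TopologicalSpace (Measure (Fin N → Y)) :=
  ⨅ (t : ℕ) (_ : 1 ≤ t) (h : t ≤ N - 1),
    TopologicalSpace.induced (infoMap N t (le_trans h (Nat.sub_le N 1)))
      (weakTop (prodTop Pi.topologicalSpace (weakTop Pi.topologicalSpace)))

/-- The `𝒲_p`-information topology. -/
def infoTopWp (p : ℝ) (d : Y → Y → ℝ≥0∞) (N : ℕ) :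
    TopologicalSpace (Measure (Fin N → Y)) :=
  ⨅ (t : ℕ) (_ : 1 ≤ t) (h : t ≤ N - 1),
    TopologicalSpace.induced (infoMap N t (le_trans h (Nat.sub_le N 1)))
      (ballTop (Wp p (prodDist p (pathDist p d) (Wp p (pathDist p d)))))

/-- Aldous' prediction process `Z_t^μ` (as a function of the path). -/
def predict (N : ℕ) (μ : Measure (Fin N → Y)) (t : ℕ) (h : t ≤ N) :
    (Fin N → Y) → Measure (Fin N → Y) :=
  fun x => condK (μ.map (fun y => (restr t h y, y))) (restr t h x)

/-- Aldous' map `E`, sending `μ` to the joint law of the path together with its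
prediction process. -/
def aldousMap (N : ℕ) (μ : Measure (Fin N → Y)) :
    Measure ((Fin N → Y) × (Fin (N + 1) → Measure (Fin N → Y))) :=
  μ.map (fun x =>
    (x, fun t : Fin (N + 1) => predict N μ t.1 (Nat.lt_succ_iff.mp t.2) x))

/-- Aldous' extended weak topology. -/
def aldousTopW (N : ℕ) : TopologicalSpace (Measure (Fin N → Y)) :=
  TopologicalSpace.induced (aldousMap N)
    (weakTop (prodTop Pi.topologicalSpace
      (@Pi.topologicalSpace (Fin (N + 1)) (fun _ => Measure (Fin N → Y))
        (fun _ => weakTop Pi.topologicalSpace))))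

/-- The extended `𝒲_p`-topology. -/
def aldousTopWp (p : ℝ) (d : Y → Y → ℝ≥0∞) (N : ℕ) :
    TopologicalSpace (Measure (Fin N → Y)) :=
  TopologicalSpace.induced (aldousMap N)
    (ballTop (Wp p (prodDist p (pathDist p d)
      (fun Z Z' : Fin (N + 1) → Measure (Fin N → Y) =>
        (∑ t, Wp p (pathDist p d) (Z t) (Z' t) ^ p) ^ (1 / p)))))

end PathStructures

/-! ### The lifted two-time-point space `𝒳₁ × 𝒫_p(𝒳₂)` -/

section Lifted

variable {A B : Type*} [MeasurableSpace A] [MeasurableSpace B]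

/-- The nested distance on `𝒳₁ × 𝒫_p(𝒳₂)`. -/
def liftDist (p : ℝ) (dA : A → A → ℝ≥0∞) (dB : B → B → ℝ≥0∞) :
    (A × Measure B) → (A × Measure B) → ℝ≥0∞ :=
  fun u v => (dA u.1 v.1 ^ p + Wp p dB u.2 v.2 ^ p) ^ (1 / p)

/-- `η` is a version of the measure-valued conditional expectation
`E_γ[X̂₂ | Y⃗]` (i.e. the barycenter of a regular conditional law of `X̂₂`
given `Y⃗ = (Y₁, Ŷ₂)`). -/
def IsCondBar (γ : Measure ((A × Measure B) × (A × Measure B)))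
    (η : (A × Measure B) × (A × Measure B) → Measure B) : Prop :=
  (∃ g : (A × Measure B) → Measure B, Measurable g ∧ ∀ z, η z = g z.2) ∧
  (∀ z, IsProbabilityMeasure (η z)) ∧
  ∀ S : Set (A × Measure B), MeasurableSet S → ∀ E : Set B, MeasurableSet E →
    ∫⁻ z in {z | z.2 ∈ S}, η z E ∂γ = ∫⁻ z in {z | z.2 ∈ S}, z.1.2 E ∂γ

/-- `AW̄_p`, the `p`-Wasserstein distance on `𝒫_p(𝒳₁ × 𝒫_p(𝒳₂))`. -/
def AWbar (p : ℝ) (dA : A → A → ℝ≥0∞) (dB : B → B → ℝ≥0∞)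
    (μ ν : Measure (A × Measure B)) : ℝ≥0∞ :=
  Wp p (liftDist p dA dB) μ ν

/-- `CW̄_p`, the lifted causal Wasserstein "distance". -/
def CWbar (p : ℝ) (dA : A → A → ℝ≥0∞) (dB : B → B → ℝ≥0∞)
    (μ ν : Measure (A × Measure B)) : ℝ≥0∞ :=
  ⨅ γ ∈ Cpl μ ν, ⨅ η ∈ {η | IsCondBar γ η},
    (∫⁻ z, (dA z.1.1 z.2.1 ^ p + Wp p dB (η z) z.2.2 ^ p) ∂γ) ^ (1 / p)

/-- `SCW̄_p`, the symmetrization of `CW̄_p`. -/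
def SCWbar (p : ℝ) (dA : A → A → ℝ≥0∞) (dB : B → B → ℝ≥0∞)
    (μ ν : Measure (A × Measure B)) : ℝ≥0∞ :=
  max (CWbar p dA dB μ ν) (CWbar p dA dB ν μ)

/-- Membership in `𝒫_p(𝒳₁ × 𝒫_p(𝒳₂))`: a probability measure, concentrated on
`𝒳₁ × 𝒫_p(𝒳₂)`, with finite `p`-th moment for the nested distance. -/
def MemPpLift (p : ℝ) (dA : A → A → ℝ≥0∞) (dB : B → B → ℝ≥0∞)
    (μ : Measure (A × Measure B)) : Prop :=
  IsProbabilityMeasure μ ∧ (∀ᵐ z ∂μ, MemPp p dB z.2) ∧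
    ∃ z₀ : A × Measure B, MemPp p dB z₀.2 ∧ ∫⁻ z, liftDist p dA dB z₀ z ^ p ∂μ ≠ ∞

/-- Two-time-point causality: given a coupling `π` of measures on products
`A₁ × B₁` and `A₂ × B₂`, the conditional law of `Y₁` given `X = (X₁, X₂)`
coincides with the conditional law of `Y₁` given `X₁`. -/
def Causal2 {A₁ B₁ A₂ B₂ : Type*} [MeasurableSpace A₁] [MeasurableSpace B₁]
    [MeasurableSpace A₂] [MeasurableSpace B₂]
    (π : Measure ((A₁ × B₁) × (A₂ × B₂))) : Prop :=
  ∀ S : Set A₂, MeasurableSet S →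
    (π[fun z => S.indicator (fun _ => (1 : ℝ)) z.2.1 |
        MeasurableSpace.comap Prod.fst inferInstance])
      =ᵐ[π]
    (π[fun z => S.indicator (fun _ => (1 : ℝ)) z.2.1 |
        MeasurableSpace.comap (fun z => z.1.1) inferInstance])

/-- The two-time-point causal Wasserstein "distance" on `𝒫_p(𝒳₁ × 𝒳₂)`. -/
def CW2 (p : ℝ) (dA : A → A → ℝ≥0∞) (dB : B → B → ℝ≥0∞)
    (μ ν : Measure (A × B)) : ℝ≥0∞ :=
  ⨅ π ∈ {π ∈ Cpl μ ν | Causal2 π},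
    (∫⁻ z, (dA z.1.1 z.2.1 ^ p + dB z.1.2 z.2.2 ^ p) ∂π) ^ (1 / p)

end Lifted


/-- Block density of a coupling with prescribed cell weights `w`. -/
def Hd (w : ℕ → ℕ → ℝ≥0∞) (m n : ℕ → ℝ≥0∞) (i j : ℕ) : ℝ≥0∞ :=
  w i j / (m i * n j) + (1 - (∑' j, w i j) / m i) *
    ((1 - (∑' i, w i j) / n j) / (1 - ∑' i, ∑' j, w i j))

/-- Feasibility of the weights. -/
def Feas (w : ℕ → ℕ → ℝ≥0∞) (m n : ℕ → ℝ≥0∞) : Prop :=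
  (∀ i, ∑' j, w i j ≤ m i) ∧ ∀ j, ∑' i, w i j ≤ n j

lemma Feas.swap {w m n} (h : Feas w m n) : Feas (fun i j => w j i) n m := ⟨h.2, h.1⟩

lemma Hd_swap (w m n i j) : Hd w m n i j = Hd (fun i j => w j i) n m j i := by
  unfold Hd
  rw [mul_comm (m i), ENNReal.tsum_comm (f := w), ← mul_div_assoc, ← mul_div_assoc,
    mul_comm (1 - (∑' j, w i j) / m i)]

lemma one_sub_div_mul {u v : ℝ≥0∞} (hu : u ≤ 1) : (1 - v / u) * u = u - v := by
  by_cases h : u = 0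
  · simp [h]
  · have h' : u ≠ ∞ := ne_top_of_le_ne_top ENNReal.one_ne_top hu
    rw [ENNReal.sub_mul (fun _ _ => h'), one_mul, ENNReal.div_mul_cancel h h']

lemma tsum_rem {w m n} (hn : ∑' j, n j = 1) (h : Feas w m n) :
    ∑' j, (1 - (∑' i, w i j) / n j) * n j = 1 - ∑' i, ∑' j, w i j := by
  have hn1 : ∀ j, n j ≤ 1 := fun j => hn ▸ ENNReal.le_tsum j
  simp_rw [one_sub_div_mul (hn1 _)]
  rw [ENNReal.tsum_sub _ h.2, hn, ENNReal.tsum_comm]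
  exact ne_top_of_le_ne_top (by simp [hn]) (ENNReal.tsum_le_tsum h.2)

lemma tsum_rem_le {w m n} (hn : ∑' j, n j = 1) (h : Feas w m n) :
    ∑' j, ((1 - (∑' i, w i j) / n j) / (1 - ∑' i, ∑' j, w i j)) * n j ≤ 1 := by
  simp_rw [div_eq_mul_inv ((1 : ℝ≥0∞) - _), mul_right_comm _ _ (n _)]
  rw [ENNReal.tsum_mul_right, tsum_rem hn h, ← div_eq_mul_inv]
  exact ENNReal.div_self_le_one

lemma Hd_sum {w m n} (hm : ∑' i, m i = 1) (hn : ∑' j, n j = 1) (h : Feas w m n) {i : ℕ}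
    (hi : m i ≠ 0) : ∑' j, Hd w m n i j * n j = 1 := by
  have hn1 : ∀ j, n j ≤ 1 := fun j => hn ▸ ENNReal.le_tsum j
  have hm1 : ∀ j, m j ≤ 1 := fun j => hm ▸ ENNReal.le_tsum j
  have hmi : m i ≠ ∞ := ne_top_of_le_ne_top ENNReal.one_ne_top (hm1 i)
  have h1 : ∀ j, w i j / (m i * n j) * n j = w i j / m i := by
    intro j
    by_cases hj : n j = 0
    · have : w i j = 0 := by
        have := (ENNReal.le_tsum (f := fun i => w i j) i).trans (h.2 j)
        simpa [hj] using this
      simp [this]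
    · have hj' : n j ≠ ∞ := ne_top_of_le_ne_top ENNReal.one_ne_top (hn1 j)
      rw [div_eq_mul_inv, ENNReal.mul_inv (Or.inl hi) (Or.inl hmi), mul_assoc, mul_assoc,
        ENNReal.inv_mul_cancel hj hj', mul_one, div_eq_mul_inv]
  simp_rw [Hd, add_mul, h1]
  rw [ENNReal.tsum_add]
  simp_rw [mul_assoc, div_eq_mul_inv ((1 : ℝ≥0∞) - _), mul_right_comm _ _ (n _)]
  rw [ENNReal.tsum_mul_left, ENNReal.tsum_mul_right, tsum_rem hn h]
  have e : ∑' j, w i j / m i = (∑' j, w i j) / m i := by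
    simp_rw [div_eq_mul_inv]; rw [ENNReal.tsum_mul_right]
  rw [e]
  have hu : (∑' j, w i j) / m i ≤ 1 := ENNReal.div_le_of_le_mul (by simpa using h.1 i)
  by_cases hW : 1 - ∑' i, ∑' j, w i j = 0
  · have h2 := tsum_rem hm h.swap
    rw [ENNReal.tsum_comm, hW, ENNReal.tsum_eq_zero] at h2
    have h3 := h2 i
    have h4 : 1 - (∑' j, w i j) / m i = 0 := by
      simpa [hi] using h3
    rw [h4, zero_mul, add_zero]
    exact le_antisymm hu (tsub_eq_zero_iff_le.mp h4)
  · rw [ENNReal.mul_inv_cancel hW (by simp), mul_one]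
    exact add_tsub_cancel_of_le hu

section Sel

variable {B Y : Type*} [MeasurableSpace B] [MeasurableSpace Y]

/-- Cell masses. -/
def cm (D : B → ℕ) (m : Measure B) (i : ℕ) : ℝ≥0∞ := m (D ⁻¹' {i})

lemma lint_D {D : B → ℕ} (hD : Measurable D) (m : Measure B) (f : ℕ → ℝ≥0∞) :
    ∫⁻ x, f (D x) ∂m = ∑' i, f i * cm D m i := by
  rw [← lintegral_map (g := D) (f := f) (measurable_from_nat) hD, lintegral_countable']
  simp_rw [Measure.map_apply hD (measurableSet_singleton _), cm]

lemma cm_sum {D : B → ℕ} (hD : Measurable D) (m : Measure B) [IsProbabilityMeasure m] :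
    ∑' i, cm D m i = 1 := by
  have := lint_D hD m (fun _ => 1)
  simpa using this.symm

lemma cm_ae {D : B → ℕ} (hD : Measurable D) (m : Measure B) :
    ∀ᵐ x ∂m, cm D m (D x) ≠ 0 := by
  have h := ae_of_ae_map (μ := m) (f := D) (p := fun i => cm D m i ≠ 0) hD.aemeasurable ?_
  · exact h
  · rw [ae_iff_of_countable]
    intro i hi
    rwa [Measure.map_apply hD (measurableSet_singleton _)] at hi

open Classical in
/-- density on cells -/
def dens (D : B → ℕ) (w : ℕ → ℕ → ℝ≥0∞) (m n : Measure B) (z : B × B) : ℝ≥0∞ :=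
  if Feas w (cm D m) (cm D n) then Hd w (cm D m) (cm D n) (D z.1) (D z.2) else 1

lemma meas_cm (D : B → ℕ) (hD : Measurable D) (a : Kernel Y B) (i : ℕ) :
    Measurable fun y => cm D (a y) i :=
  a.measurable_coe (hD (measurableSet_singleton i))

lemma meas_dens (D : B → ℕ) (hD : Measurable D) (w) (a b : Kernel Y B) :
    Measurable (Function.uncurry fun y z => dens D w (a y) (b y) z) := by
  have h0 : MeasurableSet {y | Feas w (cm D (a y)) (cm D (b y))} := by
    simp only [Feas, Set.ofPred_and, Set.ofPred_forall]
    refine MeasurableSet.inter (MeasurableSet.iInter fun i => ?_) (MeasurableSet.iInter fun i => ?_)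
    · exact measurableSet_le measurable_const (meas_cm D hD a i)
    · exact measurableSet_le measurable_const (meas_cm D hD b i)
  have h1 : Measurable (fun q : Y × (ℕ × ℕ) => Hd w (cm D (a q.1)) (cm D (b q.1)) q.2.1 q.2.2) := by
    refine measurable_from_prod_countable_left fun ij => ?_
    have := meas_cm D hD a ij.1
    have := meas_cm D hD b ij.2
    unfold Hd
    dsimp only
    fun_prop
  unfold dens
  refine Measurable.ite (measurable_fst h0) ?_ measurable_const
  exact h1.comp (f := fun q : Y × (B × B) => (q.1, (D q.2.1, D q.2.2))) (by fun_prop)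

/-- the coupling kernel -/
def Kd (D : B → ℕ) (w : ℕ → ℕ → ℝ≥0∞) (a b : Kernel Y B) : Kernel Y (B × B) :=
  (a ×ₖ b).withDensity (fun y z => dens D w (a y) (b y) z)

lemma lint_Kd (D : B → ℕ) (hD : Measurable D) (w) (a b : Kernel Y B) [IsMarkovKernel a]
    [IsMarkovKernel b] (y : Y) {f : B × B → ℝ≥0∞} (hf : Measurable f) :
    ∫⁻ z, f z ∂(Kd D w a b y) =
      ∫⁻ x, ∫⁻ x', dens D w (a y) (b y) (x, x') * f (x, x') ∂(b y) ∂(a y) := by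
  have hm := meas_dens D hD w a b
  rw [Kd, Kernel.lintegral_withDensity _ hm y hf, Kernel.lintegral_prod]
  exact (hm.comp measurable_prodMk_left).mul hf

lemma dens_marg (D : B → ℕ) (hD : Measurable D) (w) (m n : Measure B) [IsProbabilityMeasure m]
    [IsProbabilityMeasure n] {x : B} (hx : cm D m (D x) ≠ 0) :
    ∫⁻ x', dens D w m n (x, x') ∂n = 1 := by
  unfold dens
  split_ifs with h
  · rw [lint_D hD n (fun j => Hd w (cm D m) (cm D n) (D x) j)]
    exact Hd_sum (cm_sum hD m) (cm_sum hD n) h hx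
  · simp

lemma dens_swap (D : B → ℕ) (w) (m n : Measure B) (x x' : B) :
    dens D w m n (x, x') = dens D (fun i j => w j i) n m (x', x) := by
  classical
  unfold dens
  have : Feas w (cm D m) (cm D n) ↔ Feas (fun i j => w j i) (cm D n) (cm D m) :=
    ⟨Feas.swap, Feas.swap⟩
  simp only [this]
  congr 1
  rw [Hd_swap]

lemma meas_dens2 (D : B → ℕ) (hD : Measurable D) (w) (m n : Measure B) :
    Measurable (dens D w m n) := by
  have := meas_dens D hD w (Kernel.const Unit m) (Kernel.const Unit n)
  exact this.comp (measurable_prodMk_left (x := ()))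

lemma Kd_fst (D : B → ℕ) (hD : Measurable D) (w) (a b : Kernel Y B) [IsMarkovKernel a]
    [IsMarkovKernel b] (y : Y) : (Kd D w a b y).map Prod.fst = a y := by
  refine Measure.ext_of_lintegral _ fun f hf => ?_
  rw [lintegral_map hf measurable_fst, lint_Kd D hD w a b y (f := fun z => f z.1) (hf.comp measurable_fst)]
  refine lintegral_congr_ae ?_
  filter_upwards [cm_ae hD (a y)] with x hx
  have := meas_dens2 D hD w (a y) (b y)
  rw [lintegral_mul_const _ (by fun_prop), dens_marg D hD w _ _ hx, one_mul]

lemma Kd_snd (D : B → ℕ) (hD : Measurable D) (w) (a b : Kernel Y B) [IsMarkovKernel a]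
    [IsMarkovKernel b] (y : Y) : (Kd D w a b y).map Prod.snd = b y := by
  refine Measure.ext_of_lintegral _ fun f hf => ?_
  have := meas_dens2 D hD w (a y) (b y)
  rw [lintegral_map hf measurable_snd, lint_Kd D hD w a b y (f := fun z => f z.2) (hf.comp measurable_snd),
    lintegral_lintegral_swap (by fun_prop)]
  refine lintegral_congr_ae ?_
  filter_upwards [cm_ae hD (b y)] with x hx
  rw [lintegral_mul_const _ (by fun_prop)]
  simp_rw [dens_swap D w (a y)]
  rw [dens_marg D hD _ _ _ hx, one_mul]

end Sel

section Cost

variable {B : Type*} [MeasurableSpace B]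

/-- cell masses of a coupling -/
def cq (D : B → ℕ) (π : Measure (B × B)) (i j : ℕ) : ℝ≥0∞ := π ((D ⁻¹' {i}) ×ˢ (D ⁻¹' {j}))

lemma lint_DD {D : B → ℕ} (hD : Measurable D) (π : Measure (B × B)) (f : ℕ → ℕ → ℝ≥0∞) :
    ∫⁻ z, f (D z.1) (D z.2) ∂π = ∑' i, ∑' j, f i j * cq D π i j := by
  have hDD : Measurable (fun z : B × B => (D z.1, D z.2)) := by fun_prop
  rw [← lintegral_map (g := fun z : B × B => (D z.1, D z.2)) (f := fun q : ℕ × ℕ => f q.1 q.2)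
    (measurable_of_countable _) hDD, lintegral_countable', ENNReal.tsum_prod']
  refine tsum_congr fun i => tsum_congr fun j => ?_
  rw [Measure.map_apply hDD (measurableSet_singleton _), cq]
  congr 2
  ext z; simp

lemma cq_row {D : B → ℕ} (hD : Measurable D) {m n : Measure B} {π : Measure (B × B)}
    (hπ : π ∈ Cpl m n) (i : ℕ) : ∑' j, cq D π i j = cm D m i := by
  have h := lint_DD hD π (fun i' _ => if i' = i then 1 else 0)
  have h2 : ∫⁻ z, (fun i' _ => if i' = i then 1 else 0) (D z.1) (D z.2) ∂π = cm D m i := by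
    have := lint_D hD m (fun i' => if i' = i then 1 else 0)
    rw [← hπ.1, lintegral_map (f := fun x => if D x = i then (1 : ℝ≥0∞) else 0) ((measurable_from_nat (f := fun i' => if i' = i then (1 : ℝ≥0∞) else 0)).comp hD) measurable_fst] at this
    rw [this, tsum_eq_single i]
    · simp [hπ.1]
    · intro j hj; simp [hj]
  rw [← h2, h, eq_comm, tsum_eq_single i]
  · simp
  · intro j hj; simp [hj]

lemma cq_col {D : B → ℕ} (hD : Measurable D) {m n : Measure B} {π : Measure (B × B)}
    (hπ : π ∈ Cpl m n) (j : ℕ) : ∑' i, cq D π i j = cm D n j := by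
  have hs : π.map Prod.swap ∈ Cpl n m := by
    constructor
    · rw [Measure.map_map measurable_fst measurable_swap]; exact hπ.2
    · rw [Measure.map_map measurable_snd measurable_swap]; exact hπ.1
  rw [← cq_row hD hs j]
  refine tsum_congr fun i => ?_
  rw [cq, cq, Measure.map_apply measurable_swap
    ((hD (measurableSet_singleton _)).prod (hD (measurableSet_singleton _)))]
  congr 1
  ext z; simp

lemma feas_of_le {D : B → ℕ} (hD : Measurable D) {m n : Measure B} {π : Measure (B × B)}
    (hπ : π ∈ Cpl m n) {w : ℕ → ℕ → ℝ≥0∞} (hw : ∀ i j, w i j ≤ cq D π i j) : Feas w (cm D m) (cm D n) :=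
  ⟨fun i => (ENNReal.tsum_le_tsum fun j => hw i j).trans (cq_row hD hπ i).le,
   fun j => (ENNReal.tsum_le_tsum fun i => hw i j).trans (cq_col hD hπ j).le⟩

end Cost

section Cost2

variable {B : Type*} [MetricSpace B] [SecondCountableTopology B] [MeasurableSpace B] [BorelSpace B]

lemma part1 {D : B → ℕ} (hD : Measurable D) {δ : ℝ≥0∞}
    (hδ : ∀ x x', D x = D x' → edist x x' ≤ δ) {p : ℝ} (hp : 1 ≤ p)
    {m n : Measure B} [IsProbabilityMeasure m] [IsProbabilityMeasure n]
    {π : Measure (B × B)} {w : ℕ → ℕ → ℝ≥0∞} (hw : ∀ i j, w i j ≤ cq D π i j) :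
    ∫⁻ x, ∫⁻ x', w (D x) (D x') / (cm D m (D x) * cm D n (D x')) * edist x x' ^ p ∂n ∂m
      ≤ ∫⁻ z, (edist z.1 z.2 + 2 * δ) ^ p ∂π := by
  set C : ℕ → ℕ → ℝ≥0∞ := fun i j => ⨆ x, ⨆ x', ⨆ (_ : D x = i ∧ D x' = j), edist x x' ^ p with hC
  have hC1 : ∀ x x', edist x x' ^ p ≤ C (D x) (D x') := by
    intro x x'
    exact le_iSup_of_le x (le_iSup_of_le x' (le_iSup_of_le ⟨rfl, rfl⟩ le_rfl))
  have hC2 : ∀ x x', C (D x) (D x') ≤ (edist x x' + 2 * δ) ^ p := by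
    intro x x'
    refine iSup_le fun u => iSup_le fun u' => iSup_le fun ⟨h, h'⟩ => ?_
    refine ENNReal.rpow_le_rpow ?_ (by linarith)
    calc edist u u' ≤ edist u x + edist x x' + edist x' u' := edist_triangle4 _ _ _ _
      _ ≤ δ + edist x x' + δ := by gcongr <;> apply hδ <;> simp [h, h']
      _ = _ := by ring
  calc _ ≤ ∫⁻ x, ∫⁻ x', w (D x) (D x') / (cm D m (D x) * cm D n (D x')) * C (D x) (D x') ∂n ∂m := by
        gcongr with x x'; exact hC1 x x'
    _ = ∑' i, ∑' j, w i j / (cm D m i * cm D n j) * C i j * cm D n j * cm D m i := by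
        have : ∀ x, ∫⁻ x', w (D x) (D x') / (cm D m (D x) * cm D n (D x')) * C (D x) (D x') ∂n
            = ∑' j, w (D x) j / (cm D m (D x) * cm D n j) * C (D x) j * cm D n j := fun x =>
          lint_D hD n (fun j => w (D x) j / (cm D m (D x) * cm D n j) * C (D x) j)
        simp_rw [this]
        rw [lint_D hD m (fun i => ∑' j, w i j / (cm D m i * cm D n j) * C i j * cm D n j)]
        simp_rw [ENNReal.tsum_mul_right]
    _ ≤ ∑' i, ∑' j, C i j * cq D π i j := by
        refine ENNReal.tsum_le_tsum fun i => ENNReal.tsum_le_tsum fun j => ?_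
        calc _ = C i j * (w i j / (cm D m i * cm D n j) * (cm D m i * cm D n j)) := by ring
          _ ≤ C i j * w i j := by gcongr; rw [div_eq_mul_inv, mul_assoc]; exact mul_le_of_le_one_right' (ENNReal.inv_mul_le_one _)
          _ ≤ _ := by gcongr; exact hw i j
    _ = ∫⁻ z, C (D z.1) (D z.2) ∂π := (lint_DD hD π C).symm
    _ ≤ _ := lintegral_mono fun z => hC2 _ _

lemma cost_le {D : B → ℕ} (hD : Measurable D) {δ : ℝ≥0∞}
    (hδ : ∀ x x', D x = D x' → edist x x' ≤ δ) {p : ℝ} (hp : 1 ≤ p)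
    {m n : Measure B} [IsProbabilityMeasure m] [IsProbabilityMeasure n]
    {π : Measure (B × B)} (hπ : π ∈ Cpl m n) {w : ℕ → ℕ → ℝ≥0∞} (hw : ∀ i j, w i j ≤ cq D π i j) (x₀ : B) :
    ∫⁻ x, ∫⁻ x', dens D w m n (x, x') * edist x x' ^ p ∂n ∂m ≤
      ∫⁻ z, (edist z.1 z.2 + 2 * δ) ^ p ∂π + 2 ^ (p - 1) *
        (∫⁻ x, edist x₀ x ^ p * (1 - (∑' j, w (D x) j) / cm D m (D x)) ∂m +
         ∫⁻ x, edist x₀ x ^ p * (1 - (∑' i, w i (D x)) / cm D n (D x)) ∂n) := by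
  have hF := feas_of_le hD hπ hw
  set W := ∑' i, ∑' j, w i j
  set u : B → ℝ≥0∞ := fun x => 1 - (∑' j, w (D x) j) / cm D m (D x) with hu
  set v : B → ℝ≥0∞ := fun x => 1 - (∑' i, w i (D x)) / cm D n (D x) with hv
  have hum : Measurable u := (measurable_from_nat (f := fun i => 1 - (∑' j, w i j) / cm D m i)).comp hD
  have hvm : Measurable v := (measurable_from_nat (f := fun j => 1 - (∑' i, w i j) / cm D n j)).comp hD
  have hu1 : ∫⁻ x, u x / (1 - W) ∂m ≤ 1 := by
    have := tsum_rem_le (cm_sum hD m) hF.swap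
    rw [← lint_D hD m (fun j => (1 - (∑' i, w j i) / cm D m j) / (1 - ∑' i, ∑' j, w j i)),
      ENNReal.tsum_comm] at this
    exact this
  have hv1 : ∫⁻ x, v x / (1 - W) ∂n ≤ 1 := by
    have := tsum_rem_le (cm_sum hD n) hF
    rw [← lint_D hD n (fun j => (1 - (∑' i, w i j) / cm D n j) / (1 - ∑' i, ∑' j, w i j))] at this
    exact this
  have hmw : Measurable (fun q : B × B => w (D q.1) (D q.2) / (cm D m (D q.1) * cm D n (D q.2))) :=
    (measurable_of_countable (fun q : ℕ × ℕ => w q.1 q.2 / (cm D m q.1 * cm D n q.2))).comp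
      (f := fun q : B × B => (D q.1, D q.2)) (by fun_prop)
  have e1 : ∀ x x', dens D w m n (x, x') * edist x x' ^ p =
      w (D x) (D x') / (cm D m (D x) * cm D n (D x')) * edist x x' ^ p +
      u x * (v x' / (1 - W)) * edist x x' ^ p := by
    intro x x'
    rw [dens, if_pos hF, Hd, add_mul]
  simp_rw [e1]
  have hmm : Measurable (fun q : B × B => w (D q.1) (D q.2) / (cm D m (D q.1) * cm D n (D q.2))
      * edist q.1 q.2 ^ p) := by fun_prop
  have s1 : ∀ x, ∫⁻ x', (w (D x) (D x') / (cm D m (D x) * cm D n (D x')) * edist x x' ^ p +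
      u x * (v x' / (1 - W)) * edist x x' ^ p) ∂n =
      ∫⁻ x', w (D x) (D x') / (cm D m (D x) * cm D n (D x')) * edist x x' ^ p ∂n +
      ∫⁻ x', u x * (v x' / (1 - W)) * edist x x' ^ p ∂n := fun x =>
    lintegral_add_left (hmm.comp measurable_prodMk_left) _
  simp_rw [s1]
  rw [lintegral_add_left (Measurable.lintegral_prod_right hmm)]
  refine add_le_add (part1 hD hδ hp hw) ?_
  have hφ : Measurable (fun x => edist x₀ x ^ p) := by fun_prop
  set φ : B → ℝ≥0∞ := fun x => edist x₀ x ^ p with hφd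
  have htri : ∀ x x', edist x x' ^ p ≤ 2 ^ (p - 1) * (φ x + φ x') := by
    intro x x'
    refine le_trans ?_ (ENNReal.rpow_add_le_mul_rpow_add_rpow _ _ hp)
    refine ENNReal.rpow_le_rpow ?_ (by linarith)
    rw [edist_comm x₀ x]
    exact edist_triangle _ _ _
  calc _ ≤ ∫⁻ x, ∫⁻ x', 2 ^ (p - 1) * ((φ x * u x) * (v x' / (1 - W)) +
            (u x / (1 - W)) * (φ x' * v x')) ∂n ∂m := by
        refine lintegral_mono fun x => lintegral_mono fun x' => ?_
        calc u x * (v x' / (1 - W)) * edist x x' ^ p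
            ≤ u x * (v x' / (1 - W)) * (2 ^ (p - 1) * (φ x + φ x')) := by gcongr; exact htri _ _
          _ = _ := by simp only [div_eq_mul_inv]; ring
    _ = 2 ^ (p - 1) * ((∫⁻ x, φ x * u x ∂m) * (∫⁻ x', v x' / (1 - W) ∂n) +
          (∫⁻ x, u x / (1 - W) ∂m) * ∫⁻ x', φ x' * v x' ∂n) := by
        have : ∀ x, ∫⁻ x', 2 ^ (p - 1) * ((φ x * u x) * (v x' / (1 - W)) +
            (u x / (1 - W)) * (φ x' * v x')) ∂n = 2 ^ (p - 1) * ((φ x * u x) *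
            (∫⁻ x', v x' / (1 - W) ∂n) + (u x / (1 - W)) * ∫⁻ x', φ x' * v x' ∂n) := by
          intro x
          rw [lintegral_const_mul _ (by fun_prop), lintegral_add_left (by fun_prop),
            lintegral_const_mul _ (by fun_prop), lintegral_const_mul _ (by fun_prop)]
        simp_rw [this]
        rw [lintegral_const_mul _ (by fun_prop), lintegral_add_left (by fun_prop),
            lintegral_mul_const _ (by fun_prop), lintegral_mul_const _ (by fun_prop)]
    _ ≤ _ := by
        gcongr
        · exact mul_le_of_le_one_right' hv1
        · exact mul_le_of_le_one_left' hu1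

end Cost2

lemma tendsto_tsum_dom {f : ℕ → ℕ → ℝ≥0∞} {g : ℕ → ℝ≥0∞} (hg : ∑' j, g j ≠ ∞)
    (hle : ∀ k j, f k j ≤ g j) (ht : ∀ j, Tendsto (fun k => f k j) atTop (𝓝 (g j))) :
    Tendsto (fun k => ∑' j, f k j) atTop (𝓝 (∑' j, g j)) := by
  simp_rw [← lintegral_count] at *
  exact tendsto_lintegral_of_dominated_convergence g (fun k => measurable_from_nat)
    (fun k => Eventually.of_forall (hle k)) hg (Eventually.of_forall ht)

/-- rational weights -/
def Wt (R : ℕ × ℕ →₀ ℕ) (k : ℕ) (i j : ℕ) : ℝ≥0∞ := (R (i, j) : ℝ≥0∞) / (k + 1 : ℕ)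

/-- rational approximation -/
def Rk (q : ℕ → ℕ → ℝ≥0∞) (k : ℕ) : ℕ × ℕ →₀ ℕ :=
  Finsupp.onFinset (Finset.range k ×ˢ Finset.range k)
    (fun z => if z.1 < k ∧ z.2 < k then ⌊(q z.1 z.2).toReal * (k + 1 : ℕ)⌋₊ else 0)
    (by intro z hz; simp at hz; simp; exact ⟨hz.1, hz.2.1⟩)

lemma Wt_Rk (q : ℕ → ℕ → ℝ≥0∞) (k i j : ℕ) (h : i < k ∧ j < k) :
    Wt (Rk q k) k i j =
      ENNReal.ofReal ((⌊(q i j).toReal * (k + 1 : ℕ)⌋₊ : ℝ) / (k + 1 : ℕ)) := by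
  rw [ENNReal.ofReal_div_of_pos (by positivity), Wt, Rk]
  simp only [Finsupp.onFinset_apply, h, and_self, if_true]
  rw [ENNReal.ofReal_natCast, ENNReal.ofReal_natCast]

lemma Wt_le (q : ℕ → ℕ → ℝ≥0∞) (hq : ∀ i j, q i j ≠ ∞) (k i j : ℕ) :
    Wt (Rk q k) k i j ≤ q i j := by
  by_cases h : i < k ∧ j < k
  · rw [Wt_Rk q k i j h]
    refine ENNReal.ofReal_le_of_le_toReal ?_
    rw [div_le_iff₀ (by positivity)]
    exact Nat.floor_le (by positivity)
  · simp [Wt, Rk, h]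

lemma Wt_tendsto (q : ℕ → ℕ → ℝ≥0∞) (hq : ∀ i j, q i j ≠ ∞) (i j : ℕ) :
    Tendsto (fun k => Wt (Rk q k) k i j) atTop (𝓝 (q i j)) := by
  have h1 := (tendsto_nat_floor_mul_div_atTop (R := ℝ) (a := (q i j).toReal)
    ENNReal.toReal_nonneg).comp (tendsto_natCast_atTop_atTop.comp (tendsto_add_atTop_nat 1))
  have h2 := ENNReal.tendsto_ofReal h1
  rw [ENNReal.ofReal_toReal (hq i j)] at h2
  refine h2.congr' ?_
  filter_upwards [eventually_gt_atTop i, eventually_gt_atTop j] with k hi hj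
  rw [Wt_Rk q k i j ⟨hi, hj⟩]
  rfl

section Approx

variable {B : Type*} [MetricSpace B] [SecondCountableTopology B] [MeasurableSpace B] [BorelSpace B]

lemma rem_tendsto {D : B → ℕ} (hD : Measurable D) {m : Measure B} [IsProbabilityMeasure m]
    {φ : B → ℝ≥0∞} (hφ : Measurable φ) (hfin : ∫⁻ x, φ x ∂m ≠ ∞) {r : ℕ → ℕ → ℝ≥0∞}
    (hr : ∀ i, Tendsto (fun k => r k i) atTop (𝓝 (cm D m i))) :
    Tendsto (fun k => ∫⁻ x, φ x * (1 - r k (D x) / cm D m (D x)) ∂m) atTop (𝓝 0) := by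
  have h := tendsto_lintegral_of_dominated_convergence (μ := m)
    (F := fun k x => φ x * (1 - r k (D x) / cm D m (D x))) (f := fun _ => 0) φ ?_ ?_ hfin ?_
  · simpa using h
  · intro k
    exact hφ.mul ((measurable_from_nat (f := fun i => 1 - r k i / cm D m i)).comp hD)
  · intro k
    exact Eventually.of_forall fun x => mul_le_of_le_one_right' tsub_le_self
  · filter_upwards [cm_ae hD m, ae_lt_top hφ hfin] with x hx hx2
    have hx3 : cm D m (D x) ≠ ∞ := measure_ne_top _ _
    have h1 : Tendsto (fun k => r k (D x) / cm D m (D x)) atTop (𝓝 1) := by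
      have := ENNReal.Tendsto.div_const (hr (D x)) (b := cm D m (D x)) (Or.inr hx)
      rwa [ENNReal.div_self hx hx3] at this
    have h2 : Tendsto (fun k => 1 - r k (D x) / cm D m (D x)) atTop (𝓝 (1 - 1)) :=
      ENNReal.Tendsto.sub tendsto_const_nhds h1 (Or.inl ENNReal.one_ne_top)
    have h3 := ENNReal.Tendsto.const_mul h2 (a := φ x) (Or.inr hx2.ne)
    simpa using h3

lemma approx1 {D : B → ℕ} (hD : Measurable D) {δ : ℝ≥0∞}
    (hδ : ∀ x x', D x = D x' → edist x x' ≤ δ) {p : ℝ} (hp : 1 ≤ p)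
    {m n : Measure B} [IsProbabilityMeasure m] [IsProbabilityMeasure n]
    {π : Measure (B × B)} (hπ : π ∈ Cpl m n) (x₀ : B)
    (hm : ∫⁻ x, edist x₀ x ^ p ∂m ≠ ∞) (hn : ∫⁻ x, edist x₀ x ^ p ∂n ≠ ∞)
    {ε : ℝ≥0∞} (hε : 0 < ε) :
    ∃ R k, ∫⁻ x, ∫⁻ x', dens D (Wt R k) m n (x, x') * edist x x' ^ p ∂n ∂m ≤
      ∫⁻ z, (edist z.1 z.2 + 2 * δ) ^ p ∂π + ε := by
  have hfin : IsFiniteMeasure π := ⟨by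
    have : π Set.univ = m Set.univ := by
      rw [← hπ.1, Measure.map_apply measurable_fst .univ]; rfl
    rw [this]; exact measure_lt_top _ _⟩
  have hq : ∀ i j, cq D π i j ≠ ∞ := fun i j => measure_ne_top _ _
  set w : ℕ → ℕ → ℕ → ℝ≥0∞ := fun k => Wt (Rk (cq D π) k) k with hw
  have hwle : ∀ k i j, w k i j ≤ cq D π i j := fun k => Wt_le _ hq k
  have hr1 : ∀ i, Tendsto (fun k => ∑' j, w k i j) atTop (𝓝 (cm D m i)) := by
    intro i
    rw [← cq_row hD hπ i]
    refine tendsto_tsum_dom ?_ (fun k j => hwle k i j) (fun j => Wt_tendsto _ hq i j)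
    rw [cq_row hD hπ i]; exact measure_ne_top _ _
  have hr2 : ∀ i, Tendsto (fun k => ∑' j, w k j i) atTop (𝓝 (cm D n i)) := by
    intro i
    rw [← cq_col hD hπ i]
    refine tendsto_tsum_dom ?_ (fun k j => hwle k j i) (fun j => Wt_tendsto _ hq j i)
    rw [cq_col hD hπ i]; exact measure_ne_top _ _
  have hφ : Measurable (fun x => edist x₀ x ^ p) := by fun_prop
  have t1 := rem_tendsto hD hφ hm (r := fun k i => ∑' j, w k i j) hr1
  have t2 := rem_tendsto hD hφ hn (r := fun k i => ∑' j, w k j i) hr2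
  have t3 := ENNReal.Tendsto.const_mul (t1.add t2) (a := (2 : ℝ≥0∞) ^ (p - 1))
    (Or.inr (by simp [ENNReal.rpow_eq_top_iff]))
  rw [add_zero, mul_zero] at t3
  obtain ⟨k, hk⟩ := (t3.eventually_le_const hε).exists
  exact ⟨Rk (cq D π) k, k, (cost_le hD hδ hp hπ (hwle k) x₀).trans (by gcongr)⟩

lemma exists_cells [Nonempty B] {δ : ℝ≥0∞} (hδ : 0 < δ) :
    ∃ D : B → ℕ, Measurable D ∧ ∀ x x', D x = D x' → edist x x' ≤ δ := by
  classical
  have h : ∀ x : B, ∃ n, edist (TopologicalSpace.denseSeq B n) x < δ / 2 := by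
    intro x
    obtain ⟨n, hn⟩ := (TopologicalSpace.denseRange_denseSeq B).exists_mem_open
      (Metric.isOpen_eball (x := x) (ε := δ / 2)) ⟨x, Metric.mem_eball_self (ENNReal.half_pos hδ.ne')⟩
    exact ⟨n, by simpa using hn⟩
  refine ⟨fun x => Nat.find (h x), ?_, ?_⟩
  · exact Measurable.find (f := fun n _ => n) (fun n => measurable_const)
      (fun n => measurableSet_lt (by fun_prop) measurable_const) h
  · intro x x' hxx
    have h1 := Nat.find_spec (h x)
    have h2 := Nat.find_spec (h x')
    simp only at hxx
    rw [← hxx] at h2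
    calc edist x x' ≤ edist x _ + edist _ x' := edist_triangle _ (TopologicalSpace.denseSeq B (Nat.find (h x))) _
      _ ≤ δ / 2 + δ / 2 := by
        gcongr
        rw [edist_comm]; exact h1.le
      _ = δ := ENNReal.add_halves δ

lemma smooth_cost {p : ℝ} (hp : 1 ≤ p) {π : Measure (B × B)} [IsFiniteMeasure π]
    (h : ∫⁻ z, edist z.1 z.2 ^ p ∂π ≠ ∞) :
    Tendsto (fun l : ℕ => ∫⁻ z, (edist z.1 z.2 + 2 * ((l : ℝ≥0∞) + 1)⁻¹) ^ p ∂π) atTop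
      (𝓝 (∫⁻ z, edist z.1 z.2 ^ p ∂π)) := by
  refine tendsto_lintegral_of_dominated_convergence
    (fun z => 2 ^ (p - 1) * (edist z.1 z.2 ^ p + 2 ^ p)) (fun l => by fun_prop) ?_ ?_ ?_
  · intro l
    refine Eventually.of_forall fun z => ?_
    refine (ENNReal.rpow_add_le_mul_rpow_add_rpow _ _ hp).trans ?_
    dsimp only
    have : 2 * ((l : ℝ≥0∞) + 1)⁻¹ ≤ 2 := mul_le_of_le_one_right' (by simp)
    gcongr
  · rw [lintegral_const_mul _ (by fun_prop), lintegral_add_left (by fun_prop), lintegral_const]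
    refine ENNReal.mul_ne_top (by simp [ENNReal.rpow_eq_top_iff]) (ENNReal.add_ne_top.2 ⟨h, ?_⟩)
    exact ENNReal.mul_ne_top (by simp [ENNReal.rpow_eq_top_iff]) (measure_ne_top _ _)
  · refine Eventually.of_forall fun z => ?_
    have h1 : Tendsto (fun l : ℕ => 2 * ((l : ℝ≥0∞) + 1)⁻¹) atTop (𝓝 (2 * 0)) := by
      refine ENNReal.Tendsto.const_mul ?_ (Or.inr (by simp))
      have := (ENNReal.tendsto_inv_nat_nhds_zero).comp (tendsto_add_atTop_nat 1)
      simpa [Function.comp_def] using this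
    have h2 := (tendsto_const_nhds (x := edist z.1 z.2)).add h1
    rw [mul_zero, add_zero] at h2
    exact (ENNReal.continuous_rpow_const.tendsto _).comp h2

lemma iInf_cost_le [Nonempty B] {p : ℝ} (hp : 1 ≤ p) (x₀ : B) {D : ℕ → B → ℕ}
    (hD : ∀ l, Measurable (D l))
    (hDδ : ∀ l x x', D l x = D l x' → edist x x' ≤ ((l : ℝ≥0∞) + 1)⁻¹)
    {m n : Measure B} [IsProbabilityMeasure m] [IsProbabilityMeasure n]
    (hm : ∫⁻ x, edist x₀ x ^ p ∂m ≠ ∞) (hn : ∫⁻ x, edist x₀ x ^ p ∂n ≠ ∞) {V : ℝ≥0∞}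
    (hV : ∀ l R k, V ≤ ∫⁻ x, ∫⁻ x', dens (D l) (Wt R k) m n (x, x') * edist x x' ^ p ∂n ∂m) :
    V ≤ Wp p edist m n ^ p := by
  have hp0 : 0 < p := by linarith
  rw [← ENNReal.rpow_le_rpow_iff (z := 1 / p) (by positivity), ← ENNReal.rpow_mul,
    mul_one_div_cancel hp0.ne', ENNReal.rpow_one]
  refine le_iInf₂ fun π hπ => ?_
  refine ENNReal.rpow_le_rpow ?_ (by positivity)
  have hfin : IsFiniteMeasure π := ⟨by
    have : π Set.univ = m Set.univ := by
      rw [← hπ.1, Measure.map_apply measurable_fst .univ]; rfl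
    rw [this]; exact measure_lt_top _ _⟩
  by_cases hct : ∫⁻ z, edist z.1 z.2 ^ p ∂π = ∞
  · rw [hct]; exact le_top
  refine ENNReal.le_of_forall_pos_le_add fun r hr _ => ?_
  have h2 : Tendsto (fun l : ℕ => ∫⁻ z, (edist z.1 z.2 + 2 * ((l : ℝ≥0∞) + 1)⁻¹) ^ p ∂π + r) atTop
      (𝓝 (∫⁻ z, edist z.1 z.2 ^ p ∂π + r)) := (smooth_cost hp hct).add_const _
  refine ge_of_tendsto' h2 fun l => ?_
  obtain ⟨R, k, hRk⟩ := approx1 (hD l) (hDδ l) hp hπ x₀ hm hn (ε := r) (by exact_mod_cast hr)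
  exact (hV l R k).trans hRk

theorem exists_coupling_kernel [Nonempty B] {Y : Type*} [MeasurableSpace Y]
    (a b : Kernel Y B) [IsMarkovKernel a] [IsMarkovKernel b] {p : ℝ} (hp : 1 ≤ p) (x₀ : B)
    {ε : ℝ≥0∞} (hε : 0 < ε) :
    ∃ K : Kernel Y (B × B), (∀ y, (K y).map Prod.fst = a y) ∧ (∀ y, (K y).map Prod.snd = b y) ∧
      ∀ y, ∫⁻ x, edist x₀ x ^ p ∂(a y) ≠ ∞ → ∫⁻ x, edist x₀ x ^ p ∂(b y) ≠ ∞ →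
        ∫⁻ z, edist z.1 z.2 ^ p ∂(K y) ≤ Wp p edist (a y) (b y) ^ p + ε := by
  classical
  have hc : ∀ l : ℕ, ∃ D : B → ℕ, Measurable D ∧
      ∀ x x', D x = D x' → edist x x' ≤ ((l : ℝ≥0∞) + 1)⁻¹ := fun l =>
    exists_cells (by simp)
  choose D hD hDδ using hc
  obtain ⟨e, he⟩ := exists_surjective_nat (ℕ × (ℕ × ℕ →₀ ℕ) × ℕ)
  have hKex : ∃ K : ℕ → Kernel Y (B × B), ∀ t, K t =
      Kd (D (e t).1) (Wt (e t).2.1 (e t).2.2) a b := ⟨_, fun t => rfl⟩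
  obtain ⟨K, hK⟩ := hKex
  have hKf : ∀ t y, (K t y).map Prod.fst = a y := fun t y => by
    rw [hK]; exact Kd_fst _ (hD _) _ a b y
  have hKs : ∀ t y, (K t y).map Prod.snd = b y := fun t y => by
    rw [hK]; exact Kd_snd _ (hD _) _ a b y
  have hcm : ∀ t, Measurable (fun y => ∫⁻ z, edist z.1 z.2 ^ p ∂(K t y)) := fun t =>
    Measurable.lintegral_kernel (by fun_prop)
  have hVm : Measurable (fun y => ⨅ t, ∫⁻ z, edist z.1 z.2 ^ p ∂(K t y)) := Measurable.iInf hcm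
  have hex : ∀ y, ∃ t, ∫⁻ z, edist z.1 z.2 ^ p ∂(K t y) ≤
      (⨅ t, ∫⁻ z, edist z.1 z.2 ^ p ∂(K t y)) + ε := by
    intro y
    by_cases h : (⨅ t, ∫⁻ z, edist z.1 z.2 ^ p ∂(K t y)) = ∞
    · exact ⟨0, by rw [h, top_add]; exact le_top⟩
    · obtain ⟨t, ht⟩ := iInf_lt_iff.1 (ENNReal.lt_add_right h hε.ne')
      exact ⟨t, ht.le⟩
  refine ⟨⟨fun y => K (Nat.find (hex y)) y,
    Measurable.find (f := fun t y => K t y) (fun t => (K t).measurable)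
      (fun t => measurableSet_le (hcm t) (hVm.add_const ε)) hex⟩,
    fun y => hKf _ y, fun y => hKs _ y, fun y hm hn => ?_⟩
  refine (Nat.find_spec (hex y)).trans ?_
  refine add_le_add (iInf_cost_le hp x₀ hD hDδ hm hn fun l R k => ?_) le_rfl
  obtain ⟨t, ht⟩ := he (l, R, k)
  refine (iInf_le _ t).trans (le_of_eq ?_)
  rw [hK, ht, lint_Kd (D l) (hD l) _ a b y (f := fun z => edist z.1 z.2 ^ p) (by fun_prop)]

end Approx

section Causality

variable {A₁ B₁ A₂ B₂ : Type*} [MeasurableSpace A₁] [MeasurableSpace B₁]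
    [MeasurableSpace A₂] [MeasurableSpace B₂] [StandardBorelSpace A₂] [Nonempty A₂]

lemma causal_iff (π : Measure ((A₁ × B₁) × (A₂ × B₂))) [IsFiniteMeasure π] :
    Causal2 π ↔ ∀ S : Set A₂, MeasurableSet S → ∀ T : Set (A₁ × B₁), MeasurableSet T →
      ∫⁻ z in Prod.fst ⁻¹' T, condDistrib (fun z => z.2.1) (fun z => z.1.1) π z.1.1 S ∂π
        = π (Prod.fst ⁻¹' T ∩ (fun z => z.2.1) ⁻¹' S) := by
  have hY : Measurable (fun z : (A₁ × B₁) × (A₂ × B₂) => z.2.1) := by fun_prop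
  have hX1 : Measurable (fun z : (A₁ × B₁) × (A₂ × B₂) => z.1.1) := by fun_prop
  have hX : Measurable (Prod.fst : (A₁ × B₁) × (A₂ × B₂) → A₁ × B₁) := measurable_fst
  have hind : ∀ S : Set A₂, (fun z : (A₁ × B₁) × (A₂ × B₂) => S.indicator (fun _ => (1 : ℝ)) z.2.1)
      = ((fun z : (A₁ × B₁) × (A₂ × B₂) => z.2.1) ⁻¹' S).indicator (fun _ => 1) := by
    intro S; rfl
  refine forall₂_congr fun S hS => ?_
  have e1 := condDistrib_ae_eq_condExp (μ := π) hX hY hS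
  have e2 := condDistrib_ae_eq_condExp (μ := π) hX1 hY hS
  rw [hind]
  constructor
  · intro h T hT
    rw [← setLIntegral_preimage_condDistrib hX hY.aemeasurable hS hT]
    refine lintegral_congr_ae (ae_restrict_of_ae ?_)
    filter_upwards [e1, e2, h] with z h1 h2 h3
    rw [← h1, ← h2] at h3
    exact ((measureReal_eq_measureReal_iff).1 h3).symm
  · intro h
    have key : (fun x => condDistrib (fun z => z.2.1) (Prod.fst : (A₁ × B₁) × (A₂ × B₂) → A₁ × B₁) π x S)
        =ᵐ[π.map Prod.fst]
        (fun x => condDistrib (fun z => z.2.1) (fun z : (A₁ × B₁) × (A₂ × B₂) => z.1.1) π x.1 S) := by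
      have m1 := Kernel.measurable_coe (condDistrib (fun z => z.2.1)
        (Prod.fst : (A₁ × B₁) × (A₂ × B₂) → A₁ × B₁) π) hS
      have m2 : Measurable (fun x : A₁ × B₁ => condDistrib (fun z => z.2.1)
        (fun z : (A₁ × B₁) × (A₂ × B₂) => z.1.1) π x.1 S) := (Kernel.measurable_coe (condDistrib (fun z => z.2.1)
        (fun z : (A₁ × B₁) × (A₂ × B₂) => z.1.1) π) hS).comp measurable_fst
      refine ae_eq_of_forall_setLIntegral_eq_of_sigmaFinite m1 m2 fun T hT _ => ?_
      rw [setLIntegral_map hT m1 hX, setLIntegral_map hT m2 hX,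
        setLIntegral_preimage_condDistrib hX hY.aemeasurable hS hT]
      exact (h T hT).symm
    have key2 := ae_of_ae_map hX.aemeasurable key
    filter_upwards [e1, e2, key2] with z h1 h2 h3
    rw [← h1, ← h2, measureReal_def, measureReal_def, h3]

lemma lint_tau (π : Measure ((A₁ × B₁) × (A₂ × B₂))) [IsFiniteMeasure π] {S : Set A₂}
    (hS : MeasurableSet S) {k : A₁ → ℝ≥0∞} (hk : Measurable k) :
    ∫⁻ z in (fun z => z.2.1) ⁻¹' S, k z.1.1 ∂π =
      ∫⁻ x, condDistrib (fun z => z.2.1) (fun z => z.1.1) π x S * k x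
        ∂(π.map (fun z : (A₁ × B₁) × (A₂ × B₂) => z.1.1)) := by
  have hY : Measurable (fun z : (A₁ × B₁) × (A₂ × B₂) => z.2.1) := by fun_prop
  have hX1 : Measurable (fun z : (A₁ × B₁) × (A₂ × B₂) => z.1.1) := by fun_prop
  have hf : Measurable (fun q : A₁ × A₂ => S.indicator (fun _ => k q.1) q.2) := by
    have : (fun q : A₁ × A₂ => S.indicator (fun _ => k q.1) q.2)
      = (Prod.snd ⁻¹' S).indicator (fun q => k q.1) := rfl
    rw [this]
    exact (hk.comp measurable_fst).indicator (measurable_snd hS)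
  have h1 : ∫⁻ q, S.indicator (fun _ => k q.1) q.2 ∂(π.map (fun z => (z.1.1, z.2.1))) =
      ∫⁻ z in (fun z => z.2.1) ⁻¹' S, k z.1.1 ∂π := by
    rw [lintegral_map hf (by fun_prop), ← lintegral_indicator (hY hS)]
    rfl
  rw [← h1, ← compProd_map_condDistrib hY.aemeasurable, Measure.lintegral_compProd hf]
  refine lintegral_congr fun x => ?_
  simp only
  rw [lintegral_indicator hS]
  simp [mul_comm]

variable [StandardBorelSpace B₁] [Nonempty B₁]

lemma lint_disint (μ : Measure (A₁ × B₁)) [IsFiniteMeasure μ] {f : A₁ × B₁ → ℝ≥0∞}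
    (hf : Measurable f) : ∫⁻ x, f x ∂μ = ∫⁻ a, ∫⁻ b, f (a, b) ∂(μ.condKernel a) ∂μ.fst := by
  rw [← Measure.lintegral_compProd hf, μ.disintegrate]

lemma lint_disint_set (μ : Measure (A₁ × B₁)) [IsFiniteMeasure μ] {T : Set (A₁ × B₁)}
    (hT : MeasurableSet T) {k : A₁ → ℝ≥0∞} (hk : Measurable k) :
    ∫⁻ x in T, k x.1 ∂μ = ∫⁻ a, k a * μ.condKernel a (Prod.mk a ⁻¹' T) ∂μ.fst := by
  rw [← lintegral_indicator hT, lint_disint μ (f := T.indicator (fun x => k x.1)) ((hk.comp measurable_fst).indicator hT)]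
  refine lintegral_congr fun a => ?_
  have : ∀ b, T.indicator (fun x => k x.1) (a, b) = (Prod.mk a ⁻¹' T).indicator (fun _ => k a) b := by
    intro b; rfl
  simp_rw [this]
  rw [lintegral_indicator (measurable_prodMk_left hT)]
  simp

lemma map_fst_fst {π : Measure ((A₁ × B₁) × (A₂ × B₂))} {μ : Measure (A₁ × B₁)}
    (h : π.map Prod.fst = μ) : π.map (fun z => z.1.1) = μ.fst := by
  rw [← h, Measure.fst, Measure.map_map measurable_fst measurable_fst]; rfl

lemma factor {π : Measure ((A₁ × B₁) × (A₂ × B₂))} [IsFiniteMeasure π] {μ : Measure (A₁ × B₁)}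
    [IsFiniteMeasure μ] (h : π.map Prod.fst = μ) (hc : Causal2 π) {S : Set A₂}
    (hS : MeasurableSet S) {E : Set B₁} (hE : MeasurableSet E) :
    π ((fun z => z.2.1) ⁻¹' S ∩ (fun z => z.1.2) ⁻¹' E) =
      ∫⁻ z in (fun z => z.2.1) ⁻¹' S, μ.condKernel z.1.1 E ∂π := by
  have m2 := (Kernel.measurable_coe (condDistrib (fun z => z.2.1)
        (fun z : (A₁ × B₁) × (A₂ × B₂) => z.1.1) π) hS)
  rw [lint_tau π hS (Kernel.measurable_coe μ.condKernel hE), map_fst_fst h, Set.inter_comm]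
  have h1 := (causal_iff π).1 hc S hS (Prod.snd ⁻¹' E) (measurable_snd hE)
  refine h1.symm.trans ?_
  rw [← setLIntegral_map (g := Prod.fst) (f := fun x : A₁ × B₁ => condDistrib (fun z => z.2.1)
    (fun z : (A₁ × B₁) × (A₂ × B₂) => z.1.1) π x.1 S) (measurable_snd hE)
    (m2.comp measurable_fst) measurable_fst, h, lint_disint_set μ (measurable_snd hE) m2]
  rfl

/-- sufficient condition for causality -/
lemma causal_of {π : Measure ((A₁ × B₁) × (A₂ × B₂))} [IsFiniteMeasure π] {μ : Measure (A₁ × B₁)}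
    [IsFiniteMeasure μ] (h : π.map Prod.fst = μ)
    (hc : ∀ S : Set A₂, MeasurableSet S → ∀ T : Set (A₁ × B₁), MeasurableSet T →
      π (Prod.fst ⁻¹' T ∩ (fun z => z.2.1) ⁻¹' S) =
      ∫⁻ z in (fun z => z.2.1) ⁻¹' S, μ.condKernel z.1.1 (Prod.mk z.1.1 ⁻¹' T) ∂π) : Causal2 π := by
  rw [causal_iff]
  intro S hS T hT
  have m2 := (Kernel.measurable_coe (condDistrib (fun z => z.2.1)
        (fun z : (A₁ × B₁) × (A₂ × B₂) => z.1.1) π) hS)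
  rw [hc S hS T hT, lint_tau π hS (k := fun x => μ.condKernel x (Prod.mk x ⁻¹' T))
    (Kernel.measurable_kernel_prodMk_left hT), map_fst_fst h]
  rw [← setLIntegral_map (g := Prod.fst) (f := fun x : A₁ × B₁ => condDistrib (fun z => z.2.1)
    (fun z : (A₁ × B₁) × (A₂ × B₂) => z.1.1) π x.1 S) hT
    (m2.comp measurable_fst) measurable_fst, h, lint_disint_set μ hT m2]

end Causality

lemma condK_eq {α β : Type*} [MeasurableSpace α] [MeasurableSpace β] [StandardBorelSpace β]
    [Nonempty β] (ρ : Measure (α × β)) [h : IsFiniteMeasure ρ] : condK ρ = ρ.condKernel := by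
  simp [condK, h]

section Dir1

variable {A B : Type*} [MeasurableSpace A] [MeasurableSpace B] [StandardBorelSpace A] [Nonempty A]
  [StandardBorelSpace B] [Nonempty B]

theorem dir1 {p : ℝ} (hp : 1 ≤ p) (dA : A → A → ℝ≥0∞) (dB : B → B → ℝ≥0∞)
    (hdA : Measurable (fun q : A × A => dA q.1 q.2)) (hdB : Measurable (fun q : B × B => dB q.1 q.2))
    (μ ν : Measure (A × B)) [IsProbabilityMeasure μ] [IsProbabilityMeasure ν] :
    CWbar p dA dB (disint μ) (disint ν) ≤ CW2 p dA dB μ ν := by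
  refine le_iInf₂ fun π hh => ?_
  obtain ⟨hπ, hc⟩ := hh
  have hp0 : 0 < p := by linarith
  have hprob : IsProbabilityMeasure π := ⟨by
    have : π Set.univ = μ Set.univ := by
      rw [← hπ.1, Measure.map_apply measurable_fst .univ]; rfl
    rw [this]; exact measure_univ⟩
  have hκμ : Measurable (fun x => μ.condKernel x) := μ.condKernel.measurable
  have hκν : Measurable (fun x => ν.condKernel x) := ν.condKernel.measurable
  set Φ : (A × B) × (A × B) → (A × Measure B) × (A × Measure B) := fun z =>
    ((z.1.1, μ.condKernel z.1.1), (z.2.1, ν.condKernel z.2.1)) with hΦd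
  have hΦ : Measurable Φ := by
    simp only [hΦd]
    exact ((measurable_fst.comp measurable_fst).prodMk
      (hκμ.comp (measurable_fst.comp measurable_fst))).prodMk
      ((measurable_fst.comp measurable_snd).prodMk (hκν.comp (measurable_fst.comp measurable_snd)))
  have hm : ∀ ρ : Measure (A × B), IsFiniteMeasure ρ → Measurable (fun z : A × B => (z.1, condK ρ z.1)) := by
    intro ρ _
    exact measurable_fst.prodMk ((condK ρ).measurable.comp measurable_fst)
  have hγ : π.map Φ ∈ Cpl (disint μ) (disint ν) := by
    constructor
    · rw [Measure.map_map measurable_fst hΦ, disint]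
      nth_rewrite 2 [← hπ.1]
      rw [Measure.map_map (hm μ inferInstance) measurable_fst, condK_eq]
      rfl
    · rw [Measure.map_map measurable_snd hΦ, disint]
      nth_rewrite 2 [← hπ.2]
      rw [Measure.map_map (hm ν inferInstance) measurable_snd, condK_eq]
      rfl
  have hY : Measurable (fun z : (A × B) × (A × B) => z.2.1) := by fun_prop
  have hQ : Measurable (fun z : (A × B) × (A × B) => (z.1.2, z.2.2)) := by fun_prop
  set σ : Kernel A (B × B) := condDistrib (fun z : (A × B) × (A × B) => (z.1.2, z.2.2))
    (fun z => z.2.1) π with hσ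
  have hJ : π.map (fun z => z.2.1) ⊗ₘ σ = π.map (fun z => (z.2.1, (z.1.2, z.2.2))) :=
    compProd_map_condDistrib hQ.aemeasurable
  have hg : Measurable (fun q : A × Measure B => (σ q.1).map Prod.fst) :=
    (Measure.measurable_map _ measurable_fst).comp (σ.measurable.comp measurable_fst)
  have hη : IsCondBar (π.map Φ) (fun z => (σ z.2.1).map Prod.fst) := by
    refine ⟨⟨fun q => (σ q.1).map Prod.fst, hg, fun z => rfl⟩,
      fun z => Measure.isProbabilityMeasure_map measurable_fst.aemeasurable, ?_⟩
    intro S hS E hE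
    have hS' : MeasurableSet {y : A | (y, ν.condKernel y) ∈ S} := (measurable_id.prodMk hκν) hS
    have l1 : Measurable (fun z : (A × Measure B) × (A × Measure B) => ((σ z.2.1).map Prod.fst) E) :=
      (Measure.measurable_coe hE).comp (hg.comp measurable_snd)
    have l2 : Measurable (fun z : (A × Measure B) × (A × Measure B) => z.1.2 E) :=
      (Measure.measurable_coe hE).comp (measurable_snd.comp measurable_fst)
    change ∫⁻ z in Prod.snd ⁻¹' S, ((σ z.2.1).map Prod.fst) E ∂(π.map Φ)
      = ∫⁻ z in Prod.snd ⁻¹' S, z.1.2 E ∂(π.map Φ)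
    rw [setLIntegral_map (measurable_snd hS) l1 hΦ, setLIntegral_map (measurable_snd hS) l2 hΦ]
    have f1 := factor hπ.1 hc hS' hE
    have f2 := setLIntegral_preimage_condDistrib (μ := π) hY hQ.aemeasurable (measurable_fst hE) hS'
    refine Eq.trans ?_ (f2.trans f1)
    refine lintegral_congr fun z => ?_
    rw [Measure.map_apply measurable_fst hE]
  refine iInf₂_le_of_le _ hγ (iInf₂_le_of_le _ hη (ENNReal.rpow_le_rpow ?_ (by positivity)))
  refine (lintegral_map_le _ _).trans ?_
  simp only [hΦd]
  have hmA : Measurable (fun z : (A × B) × (A × B) => dA z.1.1 z.2.1 ^ p) :=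
    (hdA.comp (f := fun z : (A × B) × (A × B) => (z.1.1, z.2.1)) (by fun_prop)).pow_const p
  rw [lintegral_add_left hmA, lintegral_add_left hmA]
  refine add_le_add le_rfl ?_
  have hνfst : ν.fst = π.map (fun z => z.2.1) := by
    rw [← hπ.2, Measure.fst, Measure.map_map measurable_fst measurable_snd]; rfl
  have hνσ : ν = ν.fst ⊗ₘ σ.snd := by
    refine Measure.ext_of_lintegral _ fun f hf => ?_
    rw [Measure.lintegral_compProd hf, hνfst]
    have : ∀ y, ∫⁻ b, f (y, b) ∂(σ.snd y) = ∫⁻ q, f (y, q.2) ∂(σ y) := by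
      intro y
      rw [Kernel.snd_apply, lintegral_map (by fun_prop) measurable_snd]
    simp_rw [this]
    rw [← Measure.lintegral_compProd (f := fun w : A × (B × B) => f (w.1, w.2.2)) (by fun_prop), hJ,
      lintegral_map (by fun_prop) (by fun_prop), ← hπ.2, lintegral_map hf measurable_snd]
  have hae := eq_condKernel_of_measure_eq_compProd σ.snd hνσ
  rw [hνfst] at hae
  have hae2 := ae_of_ae_map hY.aemeasurable hae
  have hcB : Measurable (fun q : B × B => dB q.1 q.2 ^ p) := hdB.pow_const p
  calc _ ≤ ∫⁻ z, ∫⁻ q, dB q.1 q.2 ^ p ∂(σ z.2.1) ∂π := by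
        refine lintegral_mono_ae ?_
        filter_upwards [hae2] with z hz
        have : Wp p dB ((σ z.2.1).map Prod.fst) (ν.condKernel z.2.1) ≤
            (∫⁻ q, dB q.1 q.2 ^ p ∂(σ z.2.1)) ^ (1 / p) := by
          refine iInf₂_le _ ⟨rfl, ?_⟩
          rw [← hz, Kernel.snd_apply]
        calc _ ≤ ((∫⁻ q, dB q.1 q.2 ^ p ∂(σ z.2.1)) ^ (1 / p)) ^ p := ENNReal.rpow_le_rpow this hp0.le
          _ = _ := by rw [← ENNReal.rpow_mul, one_div_mul_cancel hp0.ne', ENNReal.rpow_one]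
    _ = ∫⁻ y, ∫⁻ q, dB q.1 q.2 ^ p ∂(σ y) ∂(π.map (fun z => z.2.1)) := by
        rw [lintegral_map (Measurable.lintegral_kernel hcB) hY]
    _ = ∫⁻ w, dB w.2.1 w.2.2 ^ p ∂(π.map (fun z => (z.2.1, (z.1.2, z.2.2)))) := by
        rw [← hJ, Measure.lintegral_compProd (f := fun w : A × (B × B) => dB w.2.1 w.2.2 ^ p)
          (hcB.comp measurable_snd)]
    _ ≤ _ := by rw [lintegral_map (f := fun w : A × (B × B) => dB w.2.1 w.2.2 ^ p)
                  (hcB.comp measurable_snd) (by fun_prop)]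

end Dir1

section Glue

variable {Z Q B : Type*} [MeasurableSpace Z] [MeasurableSpace Q] [MeasurableSpace B]
  [StandardBorelSpace B] [Nonempty B]

lemma glue (γ : Measure Z) [IsProbabilityMeasure γ] {s : Z → Q} (hs : Measurable s)
    (M : Kernel Z B) [IsMarkovKernel M] (a : Kernel Q B) [IsMarkovKernel a]
    (K : Kernel Q (B × B)) (hK : ∀ y, (K y).map Prod.fst = a y)
    (hJ : ∀ S : Set Q, MeasurableSet S → ∀ E : Set B, MeasurableSet E →
      ∫⁻ z in s ⁻¹' S, M z E ∂γ = ∫⁻ z in s ⁻¹' S, a (s z) E ∂γ) :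
    ∃ Θ : Measure (Z × (B × B)), IsProbabilityMeasure Θ ∧
      (∀ F : Z × B → ℝ≥0∞, Measurable F →
        ∫⁻ w, F (w.1, w.2.1) ∂Θ = ∫⁻ z, ∫⁻ x, F (z, x) ∂(M z) ∂γ) ∧
      (∀ f : Q × (B × B) → ℝ≥0∞, Measurable f →
        ∫⁻ w, f (s w.1, w.2) ∂Θ = ∫⁻ z, ∫⁻ q, f (s z, q) ∂(K (s z)) ∂γ) := by
  haveI : IsMarkovKernel K := ⟨fun y => ⟨by
    have h : (a y) Set.univ = 1 := measure_univ
    rw [← hK y, Measure.map_apply measurable_fst .univ] at h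
    simpa using h⟩⟩
  have hfst : K.fst = a := by
    ext1 y; rw [Kernel.fst_apply, hK]
  have hdis : a ⊗ₖ K.condKernel = K := by
    rw [← hfst]; exact K.disintegrate K.condKernel
  set L : Kernel (Z × B) B := K.condKernel.comap (fun w => (s w.1, w.2)) (by fun_prop) with hL
  have hL1 : IsMarkovKernel L := by rw [hL]; infer_instance
  have hJ1 : (γ ⊗ₘ M).map (fun w => (s w.1, w.2)) = γ.map s ⊗ₘ a := by
    haveI : IsProbabilityMeasure (γ.map s) := Measure.isProbabilityMeasure_map hs.aemeasurable
    haveI : IsProbabilityMeasure ((γ ⊗ₘ M).map (fun w => (s w.1, w.2))) :=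
      Measure.isProbabilityMeasure_map (by fun_prop)
    refine Measure.ext_prod fun {S E} hS hE => ?_
    rw [Measure.compProd_apply_prod hS hE, Measure.map_apply (by fun_prop) (hS.prod hE),
      setLIntegral_map hS (Kernel.measurable_coe _ hE) hs, ← hJ S hS E hE,
      ← Measure.compProd_apply_prod (hs hS) hE]
    rfl
  refine ⟨γ ⊗ₘ (M ⊗ₖ L), inferInstance, ?_, ?_⟩
  · intro F hF
    rw [Measure.lintegral_compProd (f := fun w : Z × (B × B) => F (w.1, w.2.1)) (by fun_prop)]
    refine lintegral_congr fun z => ?_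
    rw [Kernel.lintegral_compProd M L z (f := fun w : B × B => F (z, w.1)) (by fun_prop)]
    simp
  · intro f hf
    rw [Measure.lintegral_compProd (f := fun w : Z × (B × B) => f (s w.1, w.2)) (by fun_prop)]
    have e1 : ∀ z, ∫⁻ q, f (s z, q) ∂((M ⊗ₖ L) z) =
        ∫⁻ x, ∫⁻ x', f (s z, (x, x')) ∂(K.condKernel (s z, x)) ∂(M z) := by
      intro z
      rw [Kernel.lintegral_compProd M L z (f := fun w : B × B => f (s z, w)) (by fun_prop)]
      simp [hL]
    have e2 : ∀ y, ∫⁻ q, f (y, q) ∂(K y) =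
        ∫⁻ x, ∫⁻ x', f (y, (x, x')) ∂(K.condKernel (y, x)) ∂(a y) := by
      intro y
      rw [← Kernel.lintegral_compProd a K.condKernel y (f := fun w : B × B => f (y, w)) (by fun_prop),
        hdis]
    have hh : Measurable (fun w : Q × B => ∫⁻ x', f (w.1, (w.2, x')) ∂(K.condKernel w)) :=
      Measurable.lintegral_kernel_prod_right' (f := fun u : (Q × B) × B => f (u.1.1, (u.1.2, u.2)))
        (by fun_prop)
    have hh2 : Measurable (fun y : Q =>
        ∫⁻ x, ∫⁻ x', f (y, (x, x')) ∂(K.condKernel (y, x)) ∂(a y)) :=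
      Measurable.lintegral_kernel_prod_right'
        (f := fun w : Q × B => ∫⁻ x', f (w.1, (w.2, x')) ∂(K.condKernel w)) hh
    simp_rw [e1, e2]
    rw [← lintegral_map (f := fun y : Q =>
        ∫⁻ x, ∫⁻ x', f (y, (x, x')) ∂(K.condKernel (y, x)) ∂(a y)) hh2 hs,
      ← Measure.lintegral_compProd hh, ← hJ1, lintegral_map hh (by fun_prop),
      Measure.lintegral_compProd
        (f := fun w : Z × B => ∫⁻ x', f (s w.1, (w.2, x')) ∂(K.condKernel (s w.1, w.2)))
        (hh.comp (by fun_prop))]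

end Glue

/-- replace a measure which is not a probability measure by a Dirac mass -/
def fixM {B : Type*} [MeasurableSpace B] (x₀ : B) (m : Measure B) : Measure B :=
  letI := Classical.dec (m Set.univ = 1)
  if m Set.univ = 1 then m else Measure.dirac x₀

lemma fixM_eq {B : Type*} [MeasurableSpace B] (x₀ : B) {m : Measure B} (h : m Set.univ = 1) :
    fixM x₀ m = m := by simp [fixM, h]

lemma fixM_prob {B : Type*} [MeasurableSpace B] (x₀ : B) (m : Measure B) :
    IsProbabilityMeasure (fixM x₀ m) := by
  by_cases h : m Set.univ = 1
  · rw [fixM_eq x₀ h]; exact ⟨h⟩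
  · simp only [fixM, h, if_false]; infer_instance

lemma measurable_fixM {B : Type*} [MeasurableSpace B] (x₀ : B) : Measurable (fixM x₀) := by
  classical
  have : fixM x₀ = fun m => if m Set.univ = 1 then m else Measure.dirac x₀ := by
    ext1 m; by_cases h : m Set.univ = 1 <;> simp [fixM, h]
  rw [this]
  exact Measurable.ite (measurableSet_eq_fun (Measure.measurable_coe .univ) measurable_const)
    measurable_id measurable_const

lemma moment_snd {A B : Type*} [MeasurableSpace A] [MetricSpace B] [SecondCountableTopology B]
    [MeasurableSpace B] [BorelSpace B] {p : ℝ} (hp : 1 ≤ p) {dA : A → A → ℝ≥0∞}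
    {μ : Measure (A × B)} (hμ : MemPp p (prodDist p dA edist) μ) (b₀ : B) :
    ∫⁻ z, edist b₀ z.2 ^ p ∂μ ≠ ∞ := by
  obtain ⟨h1, x₀, h2⟩ := hμ
  have hp0 : 0 < p := by linarith
  have h3 : ∫⁻ z, edist x₀.2 z.2 ^ p ∂μ ≠ ∞ := by
    refine ne_top_of_le_ne_top h2 (lintegral_mono fun z => ?_)
    simp only [prodDist]
    rw [← ENNReal.rpow_mul, one_div_mul_cancel hp0.ne', ENNReal.rpow_one]
    exact le_add_self
  have hm : Measurable (fun z : A × B => edist x₀.2 z.2 ^ p) := by fun_prop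
  have h4 : ∫⁻ z, edist b₀ z.2 ^ p ∂μ ≤
      ∫⁻ z, (2 : ℝ≥0∞) ^ (p - 1) * (edist b₀ x₀.2 ^ p + edist x₀.2 z.2 ^ p) ∂μ := by
    refine lintegral_mono fun z => ?_
    refine le_trans (ENNReal.rpow_le_rpow (edist_triangle b₀ x₀.2 z.2) hp0.le) ?_
    exact ENNReal.rpow_add_le_mul_rpow_add_rpow _ _ hp
  refine ne_top_of_le_ne_top ?_ h4
  have c1 : (2 : ℝ≥0∞) ^ (p - 1) ≠ ∞ := ENNReal.rpow_ne_top_of_nonneg (by linarith) (by simp)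
  have c2 : edist b₀ x₀.2 ^ p ≠ ∞ := ENNReal.rpow_ne_top_of_nonneg hp0.le (edist_ne_top _ _)
  rw [lintegral_const_mul _ (by fun_prop), lintegral_add_right _ hm]
  refine ENNReal.mul_ne_top c1 (ENNReal.add_ne_top.2 ⟨?_, h3⟩)
  simpa using c2

section Dir2

variable {A B : Type*} [MeasurableSpace A] [StandardBorelSpace A] [Nonempty A]
  [MetricSpace B] [CompleteSpace B] [SecondCountableTopology B] [MeasurableSpace B] [BorelSpace B]
  [Nonempty B]

theorem dir2_core {p : ℝ} (hp : 1 ≤ p) (dA : A → A → ℝ≥0∞)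
    (hdA : Measurable (fun q : A × A => dA q.1 q.2))
    (μ ν : Measure (A × B)) [IsProbabilityMeasure μ] [IsProbabilityMeasure ν]
    (hμ : ∀ b₀, ∫⁻ z, edist b₀ z.2 ^ p ∂μ ≠ ∞) (hν : ∀ b₀, ∫⁻ z, edist b₀ z.2 ^ p ∂ν ≠ ∞)
    {γ : Measure ((A × Measure B) × (A × Measure B))} (hγ : γ ∈ Cpl (disint μ) (disint ν))
    {η : (A × Measure B) × (A × Measure B) → Measure B} (hη : IsCondBar γ η)
    {ε : ℝ≥0∞} (hε : 0 < ε) :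
    ∃ π ∈ Cpl μ ν, Causal2 π ∧ ∫⁻ z, (dA z.1.1 z.2.1 ^ p + edist z.1.2 z.2.2 ^ p) ∂π ≤
      ∫⁻ z, (dA z.1.1 z.2.1 ^ p + Wp p edist (η z) z.2.2 ^ p) ∂γ + ε := by
  obtain ⟨⟨g, hg, hgη⟩, hηp, hbar⟩ := hη
  obtain ⟨hγ1, hγ2⟩ := hγ
  have x₀ : B := Classical.arbitrary B
  have hdm : ∀ ρ : Measure (A × B), Measurable (fun z : A × B => (z.1, condK ρ z.1)) := fun ρ =>
    measurable_fst.prodMk ((condK ρ).measurable.comp measurable_fst)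
  -- integrals against the marginals of `γ`
  have i1 : ∀ φ : A × Measure B → ℝ≥0∞, Measurable φ →
      ∫⁻ z, φ z.1 ∂γ = ∫⁻ z, φ (z.1, μ.condKernel z.1) ∂μ := by
    intro φ hφ
    rw [← lintegral_map (f := φ) (g := Prod.fst) hφ measurable_fst, hγ1, disint,
      lintegral_map hφ (hdm μ), condK_eq]
  have i2 : ∀ φ : A × Measure B → ℝ≥0∞, Measurable φ →
      ∫⁻ z, φ z.2 ∂γ = ∫⁻ z, φ (z.1, ν.condKernel z.1) ∂ν := by
    intro φ hφ
    rw [← lintegral_map (f := φ) (g := Prod.snd) hφ measurable_snd, hγ2, disint,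
      lintegral_map hφ (hdm ν), condK_eq]
  have hγp : IsProbabilityMeasure γ := ⟨by
    have := i1 (fun _ => 1) measurable_const
    simpa using this⟩
  have ae1 : ∀ E : Set B, MeasurableSet E → ∀ᵐ z ∂γ, z.1.2 E = μ.condKernel z.1.1 E := by
    intro E hE
    have hm : MeasurableSet {q : A × Measure B | q.2 E = μ.condKernel q.1 E} :=
      measurableSet_eq_fun ((Measure.measurable_coe hE).comp measurable_snd)
        ((Kernel.measurable_coe μ.condKernel hE).comp measurable_fst)
    refine ae_of_ae_map (f := Prod.fst) (p := fun q : A × Measure B => q.2 E = μ.condKernel q.1 E)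
      measurable_fst.aemeasurable ?_
    rw [hγ1, disint, ae_map_iff (hdm μ).aemeasurable hm, condK_eq]
    exact ae_of_all _ fun z => rfl
  have ae2 : ∀ᵐ z ∂γ, z.2.2 Set.univ = 1 := by
    have hm : MeasurableSet {q : A × Measure B | q.2 Set.univ = 1} :=
      measurableSet_eq_fun ((Measure.measurable_coe .univ).comp measurable_snd) measurable_const
    refine ae_of_ae_map (f := Prod.snd) (p := fun q : A × Measure B => q.2 Set.univ = 1)
      measurable_snd.aemeasurable ?_
    rw [hγ2, disint, ae_map_iff (hdm ν).aemeasurable hm, condK_eq]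
    exact ae_of_all _ fun z => measure_univ
  -- kernels
  let a : Kernel (A × Measure B) B := ⟨fun y => fixM x₀ (g y), (measurable_fixM x₀).comp hg⟩
  let b : Kernel (A × Measure B) B :=
    ⟨fun y => fixM x₀ y.2, (measurable_fixM x₀).comp measurable_snd⟩
  have ha : ∀ y, a y = fixM x₀ (g y) := fun y => rfl
  have hb : ∀ y, b y = fixM x₀ y.2 := fun y => rfl
  haveI : IsMarkovKernel a := ⟨fun y => fixM_prob x₀ _⟩
  haveI : IsMarkovKernel b := ⟨fun y => fixM_prob x₀ _⟩
  have haη : ∀ z : (A × Measure B) × (A × Measure B), a z.2 = η z := by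
    intro z
    rw [ha, ← hgη]
    exact fixM_eq x₀ (hηp z).measure_univ
  obtain ⟨K, hK1, hK2, hK3⟩ := exists_coupling_kernel a b hp x₀ hε
  obtain ⟨Θ, hΘ, I1, I2⟩ := glue γ (s := Prod.snd) measurable_snd
    (μ.condKernel.comap (fun z : (A × Measure B) × (A × Measure B) => z.1.1) (by fun_prop))
    a K hK1 (by
      intro S hS E hE
      have := hbar S hS E hE
      simp_rw [haη]
      refine Eq.trans ?_ this.symm
      refine lintegral_congr_ae (ae_restrict_of_ae ?_)
      filter_upwards [ae1 E hE] with z hz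
      rw [hz]; rfl)
  simp only [Kernel.comap_apply] at I1
  have hF : Measurable (fun w : ((A × Measure B) × (A × Measure B)) × (B × B) =>
      ((w.1.1.1, w.2.1), (w.1.2.1, w.2.2))) := by fun_prop
  have m1 : (Θ.map (fun w => ((w.1.1.1, w.2.1), (w.1.2.1, w.2.2)))).map Prod.fst = μ := by
    refine Measure.ext_of_lintegral _ fun f hf => ?_
    rw [lintegral_map hf measurable_fst,
      lintegral_map (f := fun z : (A × B) × (A × B) => f z.1) (hf.comp measurable_fst) hF]
    refine (I1 (fun w => f (w.1.1.1, w.2)) (by fun_prop)).trans ?_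
    rw [lint_disint μ hf]
    have hm : Measurable (fun x : A => ∫⁻ y, f (x, y) ∂(μ.condKernel x)) :=
      Measurable.lintegral_kernel_prod_right' hf
    refine (i1 (fun q => ∫⁻ y, f (q.1, y) ∂(μ.condKernel q.1)) (hm.comp measurable_fst)).trans ?_
    rw [Measure.fst, lintegral_map hm measurable_fst]
  have m2 : (Θ.map (fun w => ((w.1.1.1, w.2.1), (w.1.2.1, w.2.2)))).map Prod.snd = ν := by
    refine Measure.ext_of_lintegral _ fun f hf => ?_
    rw [lintegral_map hf measurable_snd,
      lintegral_map (f := fun z : (A × B) × (A × B) => f z.2) (hf.comp measurable_snd) hF]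
    refine (I2 (fun w => f (w.1.1, w.2.2)) (by fun_prop)).trans ?_
    have e : ∀ y : A × Measure B, ∫⁻ q, f (y.1, q.2) ∂(K y) = ∫⁻ x, f (y.1, x) ∂(b y) := by
      intro y
      rw [← hK2 y, lintegral_map (by fun_prop) measurable_snd]
    simp_rw [e]
    have hm : Measurable (fun y : A × Measure B => ∫⁻ x, f (y.1, x) ∂(b y)) :=
      Measurable.lintegral_kernel_prod_right' (f := fun w : (A × Measure B) × B => f (w.1.1, w.2))
        (by fun_prop)
    rw [i2 _ hm, lint_disint ν hf]
    have hm' : Measurable (fun x : A => ∫⁻ y, f (x, y) ∂(ν.condKernel x)) :=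
      Measurable.lintegral_kernel_prod_right' hf
    rw [Measure.fst, lintegral_map hm' measurable_fst]
    refine lintegral_congr fun z => ?_
    rw [hb, fixM_eq x₀ measure_univ]
  haveI : IsProbabilityMeasure (Θ.map (fun w => ((w.1.1.1, w.2.1), (w.1.2.1, w.2.2)))) :=
    Measure.isProbabilityMeasure_map hF.aemeasurable
  refine ⟨Θ.map (fun w => ((w.1.1.1, w.2.1), (w.1.2.1, w.2.2))), ⟨m1, m2⟩, ?_, ?_⟩
  · refine causal_of m1 fun S hS T hT => ?_
    have hk : Measurable (fun x => μ.condKernel x (Prod.mk x ⁻¹' T)) :=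
      Kernel.measurable_kernel_prodMk_left hT
    have hYS : MeasurableSet ((fun z : (A × B) × (A × B) => z.2.1) ⁻¹' S) :=
      (measurable_fst.comp measurable_snd) hS
    have hYS' : MeasurableSet ((fun z : (A × Measure B) × (A × Measure B) => z.2.1) ⁻¹' S) :=
      (measurable_fst.comp measurable_snd) hS
    rw [← lintegral_indicator_one ((measurable_fst hT).inter hYS),
      lintegral_map ((measurable_one).indicator ((measurable_fst hT).inter hYS)) hF,
      ← lintegral_indicator hYS,
      lintegral_map (f := ((fun z : (A × B) × (A × B) => z.2.1) ⁻¹' S).indicator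
        (fun z => μ.condKernel z.1.1 (Prod.mk z.1.1 ⁻¹' T))) ((hk.comp (measurable_fst.comp measurable_fst)).indicator hYS) hF]
    have hTm : MeasurableSet {w : ((A × Measure B) × (A × Measure B)) × B |
        (w.1.1.1, w.2) ∈ T ∧ w.1.2.1 ∈ S} := by
      have q1 : Measurable (fun w : ((A × Measure B) × (A × Measure B)) × B =>
        (w.1.1.1, w.2)) := by fun_prop
      have q2 : Measurable (fun w : ((A × Measure B) × (A × Measure B)) × B => w.1.2.1) := by
        fun_prop
      exact (q1 hT).inter (q2 hS)
    refine (I1 ({w : ((A × Measure B) × (A × Measure B)) × B |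
        (w.1.1.1, w.2) ∈ T ∧ w.1.2.1 ∈ S}.indicator 1) (measurable_one.indicator hTm)).trans ?_
    refine Eq.trans ?_ (I1 (fun w => ((fun z : (A × Measure B) × (A × Measure B) => z.2.1) ⁻¹' S).indicator
      (fun z => μ.condKernel z.1.1 (Prod.mk z.1.1 ⁻¹' T)) w.1)
      (((hk.comp (measurable_fst.comp measurable_fst)).indicator hYS').comp measurable_fst)).symm
    refine lintegral_congr fun z => ?_
    dsimp only
    rw [lintegral_const, measure_univ, mul_one]
    by_cases hz : z.2.1 ∈ S
    · rw [Set.indicator_of_mem (by exact hz), ← lintegral_indicator_one (measurable_prodMk_left hT)]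
      refine lintegral_congr fun x => ?_
      by_cases hx : (z.1.1, x) ∈ T
      · rw [Set.indicator_of_mem (by exact ⟨hx, hz⟩), Set.indicator_of_mem (by exact hx)]; rfl
      · rw [Set.indicator_of_notMem (by exact fun h => hx h.1),
          Set.indicator_of_notMem (by exact hx)]
    · rw [Set.indicator_of_notMem (by exact hz), ← lintegral_zero]
      refine lintegral_congr fun x => ?_
      exact Set.indicator_of_notMem (by exact fun h => hz h.2) _
  · have hmA : Measurable (fun z : (A × B) × (A × B) => dA z.1.1 z.2.1 ^ p) :=
      (hdA.comp (f := fun z : (A × B) × (A × B) => (z.1.1, z.2.1)) (by fun_prop)).pow_const p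
    have hmA' : Measurable (fun z : (A × Measure B) × (A × Measure B) => dA z.1.1 z.2.1 ^ p) :=
      (hdA.comp (f := fun z : (A × Measure B) × (A × Measure B) => (z.1.1, z.2.1))
        (by fun_prop)).pow_const p
    have hmB : Measurable (fun z : (A × B) × (A × B) => edist z.1.2 z.2.2 ^ p) := by fun_prop
    have hd0 : Measurable (fun x : B => edist x₀ x ^ p) := by fun_prop
    have c1 : ∫⁻ z, dA z.1.1 z.2.1 ^ p ∂(Θ.map (fun w => ((w.1.1.1, w.2.1), (w.1.2.1, w.2.2)))) =
        ∫⁻ z, dA z.1.1 z.2.1 ^ p ∂γ := by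
      rw [lintegral_map hmA hF]
      refine (I1 (fun w => dA w.1.1.1 w.1.2.1 ^ p) (hmA'.comp measurable_fst)).trans ?_
      simp
    have c2 : ∫⁻ z, edist z.1.2 z.2.2 ^ p
        ∂(Θ.map (fun w => ((w.1.1.1, w.2.1), (w.1.2.1, w.2.2)))) =
        ∫⁻ z, ∫⁻ q, edist q.1 q.2 ^ p ∂(K z.2) ∂γ := by
      rw [lintegral_map hmB hF]
      exact I2 (fun w => edist w.2.1 w.2.2 ^ p) (by fun_prop)
    have fa : ∀ᵐ z ∂γ, ∫⁻ x, edist x₀ x ^ p ∂(a z.2) ≠ ∞ := by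
      have hm : Measurable (fun y : A × Measure B => ∫⁻ x, edist x₀ x ^ p ∂(a y)) :=
        Measurable.lintegral_kernel hd0
      have e : ∫⁻ z, ∫⁻ x, edist x₀ x ^ p ∂(a z.2) ∂γ ≠ ∞ := by
        have e1 : ∀ y : A × Measure B, ∫⁻ x, edist x₀ x ^ p ∂(a y)
            = ∫⁻ q, edist x₀ q.1 ^ p ∂(K y) := by
          intro y
          rw [← hK1 y, lintegral_map hd0 measurable_fst]
        simp_rw [e1]
        have e2 := I2 (fun w => edist x₀ w.2.1 ^ p) (by fun_prop)
        rw [← e2]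
        have e3 := hμ x₀
        rw [← m1, lintegral_map (by fun_prop) measurable_fst, lintegral_map (by fun_prop) hF] at e3
        exact e3
      filter_upwards [ae_lt_top (hm.comp measurable_snd) e] with z hz using hz.ne
    have fb : ∀ᵐ z ∂γ, ∫⁻ x, edist x₀ x ^ p ∂(b z.2) ≠ ∞ := by
      have hm : Measurable (fun y : A × Measure B => ∫⁻ x, edist x₀ x ^ p ∂(b y)) :=
        Measurable.lintegral_kernel hd0
      have e : ∫⁻ z, ∫⁻ x, edist x₀ x ^ p ∂(b z.2) ∂γ ≠ ∞ := by
        have e1 : ∀ y : A × Measure B, ∫⁻ x, edist x₀ x ^ p ∂(b y)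
            = ∫⁻ q, edist x₀ q.2 ^ p ∂(K y) := by
          intro y
          rw [← hK2 y, lintegral_map hd0 measurable_snd]
        simp_rw [e1]
        have e2 := I2 (fun w => edist x₀ w.2.2 ^ p) (by fun_prop)
        rw [← e2]
        have e3 := hν x₀
        rw [← m2, lintegral_map (by fun_prop) measurable_snd, lintegral_map (by fun_prop) hF] at e3
        exact e3
      filter_upwards [ae_lt_top (hm.comp measurable_snd) e] with z hz using hz.ne
    rw [lintegral_add_left hmA, lintegral_add_left hmA', c1, c2, add_assoc]
    refine add_le_add le_rfl ?_
    have : ∫⁻ z, (Wp p edist (η z) z.2.2 ^ p + ε) ∂γ =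
        ∫⁻ z, Wp p edist (η z) z.2.2 ^ p ∂γ + ε := by
      rw [lintegral_add_right _ measurable_const]; simp
    rw [← this]
    refine lintegral_mono_ae ?_
    filter_upwards [fa, fb, ae2] with z h1 h2 h3
    have h4 := hK3 z.2 h1 h2
    rwa [haη, hb, fixM_eq x₀ h3] at h4

theorem dir2 {p : ℝ} (hp : 1 ≤ p) (dA : A → A → ℝ≥0∞)
    (hdA : Measurable (fun q : A × A => dA q.1 q.2))
    (μ ν : Measure (A × B)) [IsProbabilityMeasure μ] [IsProbabilityMeasure ν]
    (hμ : ∀ b₀, ∫⁻ z, edist b₀ z.2 ^ p ∂μ ≠ ∞) (hν : ∀ b₀, ∫⁻ z, edist b₀ z.2 ^ p ∂ν ≠ ∞) :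
    CW2 p dA edist μ ν ≤ CWbar p dA edist (disint μ) (disint ν) := by
  have hp0 : 0 < p := by linarith
  refine le_iInf₂ fun γ hγ => le_iInf₂ fun η hη => ?_
  rw [one_div, ENNReal.le_rpow_inv_iff hp0]
  refine ENNReal.le_of_forall_pos_le_add fun ε hε _ => ?_
  obtain ⟨π, h1, h2, h3⟩ := dir2_core hp dA hdA μ ν hμ hν hγ hη
    (ε := (ε : ℝ≥0∞)) (by exact_mod_cast hε)
  refine le_trans ?_ h3
  rw [← ENNReal.le_rpow_inv_iff hp0, ← one_div]
  exact iInf₂_le _ ⟨h1, h2⟩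

end Dir2

/-- `CW̄_p` extends the two-time-point causal Wasserstein distance `CW_p` under
the disintegration embedding of `𝒫_p(𝒳₁ × 𝒳₂)` into `𝒫_p(𝒳₁ × 𝒫_p(𝒳₂))`. -/
theorem CWbar_extends_CW
    {X1 X2 : Type} [MetricSpace X1] [CompleteSpace X1] [SecondCountableTopology X1]
    [MeasurableSpace X1] [BorelSpace X1] [Nonempty X1]
    [MetricSpace X2] [CompleteSpace X2] [SecondCountableTopology X2]
    [MeasurableSpace X2] [BorelSpace X2] [Nonempty X2]
    (p : ℝ) (hp : 1 ≤ p)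
    (μ ν : Measure (X1 × X2))
    (hμ : MemPp p (prodDist p (edist : X1 → X1 → ℝ≥0∞) (edist : X2 → X2 → ℝ≥0∞)) μ)
    (hν : MemPp p (prodDist p (edist : X1 → X1 → ℝ≥0∞) (edist : X2 → X2 → ℝ≥0∞)) ν) :
    CW2 p (edist : X1 → X1 → ℝ≥0∞) (edist : X2 → X2 → ℝ≥0∞) μ ν =
      CWbar p edist edist (disint μ) (disint ν) := by
  have h1 := hμ.1
  have h2 := hν.1
  exact le_antisymm
    (dir2 hp edist (by fun_prop) μ ν (moment_snd hp hμ) (moment_snd hp hν))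
    (dir1 hp edist edist (by fun_prop) (by fun_prop) μ ν)

end AWPaper
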